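/- Let (h_i, p_i) be a contracting-on-average iterated function system on ℝ^d as above, with unique invariant probability measure ν. Assume in addition that each h_i is conformal and that the system satisfies the strong open set condition. Then the Hausdorff dimension of ν exists and equals s = (∫ ∑_i p_i(x) log p_i(x) dν(x)) / (∫ ∑_i p_i(x) log h_i'(x) dν(x)). -/

import Mathlib

open MeasureTheory Metric Filter ENNReal NNReal

noncomputable section

/-- The upper Hausdorff dimension of a measure: the infimum of the Hausdorff
dimensions of sets of full measure. -/
def upperDimH {X : Type*} [EMetricSpace X] [MeasurableSpace X]
    (μ : Measure X) : ℝ≥0∞ :=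
  ⨅ (s : Set X) (_ : μ sᶜ = 0), dimH s

/-- The lower Hausdorff dimension of a measure: the infimum of the Hausdorff
dimensions of sets of positive measure. -/
def lowerDimH {X : Type*} [EMetricSpace X] [MeasurableSpace X]
    (μ : Measure X) : ℝ≥0∞ :=
  ⨅ (s : Set X) (_ : 0 < μ s), dimH s


set_option linter.unusedSectionVars false

section Hadamard

variable {V : Type*} [NormedAddCommGroup V] [NormedSpace ℝ V] [FiniteDimensional ℝ V]

lemma had_strict {h : V → V} (hs : ContDiff ℝ 1 h) {x : V} {e : V ≃L[ℝ] V}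
    (he : (e : V →L[ℝ] V) = fderiv ℝ h x) : HasStrictFDerivAt h (e : V →L[ℝ] V) x := by
  rw [he]
  exact (hs.contDiffAt).hasStrictFDerivAt one_ne_zero

lemma had_localHomeo {h : V → V} (hs : ContDiff ℝ 1 h)
    (hinv : ∀ x, ∃ e : V ≃L[ℝ] V, (e : V →L[ℝ] V) = fderiv ℝ h x) : IsLocalHomeomorph h := by
  have : CompleteSpace V := FiniteDimensional.complete ℝ V
  intro x
  obtain ⟨e, he⟩ := hinv x
  exact ⟨(had_strict hs he).toOpenPartialHomeomorph h,
    (had_strict hs he).mem_toOpenPartialHomeomorph_source, rfl⟩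

lemma had_deriv {h : V → V} (hs : ContDiff ℝ 1 h)
    {γ : ℝ → V} {J : Set ℝ} (hγ : ContinuousOn γ J) {a w : V}
    (hl : ∀ s ∈ J, h (γ s) = a + s • w) {s : ℝ} (hsJ : s ∈ J)
    {e : V ≃L[ℝ] V} (he : (e : V →L[ℝ] V) = fderiv ℝ h (γ s)) :
    HasDerivWithinAt γ (e.symm w) J s := by
  have : CompleteSpace V := FiniteDimensional.complete ℝ V
  have hst := had_strict hs he
  have h1 : ∀ᶠ x in nhds (γ s), hst.localInverse h e (γ s) (h x) = x :=
    hst.eventually_left_inverse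
  have h2 : ∀ᶠ s' in nhdsWithin s J, hst.localInverse h e (γ s) (a + s' • w) = γ s' := by
    have := (hγ s hsJ).eventually h1
    filter_upwards [this, self_mem_nhdsWithin] with s' h3 h4
    rw [← hl s' h4, h3]
  have h3 : HasFDerivAt (hst.localInverse h e (γ s)) (e.symm : V →L[ℝ] V) (a + s • w) := by
    have := hst.to_localInverse.hasFDerivAt
    rwa [hl s hsJ] at this
  have h4 : HasDerivAt (fun s' : ℝ => a + s' • w) w s := by
    simpa using ((hasDerivAt_id s).smul_const w).const_add a
  have h5 := (h3.comp_hasDerivAt s h4).hasDerivWithinAt (s := J)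
  refine h5.congr_of_eventuallyEq ?_ ?_
  · filter_upwards [h2] with s' h6
    simp [h6]
  · have := h1.self_of_nhds
    rw [hl s hsJ] at this
    simp [this]

lemma had_lip {h : V → V} (hs : ContDiff ℝ 1 h) {C : ℝ}
    (hinv : ∀ x, ∃ e : V ≃L[ℝ] V, (e : V →L[ℝ] V) = fderiv ℝ h x ∧ ‖(e.symm : V →L[ℝ] V)‖ ≤ C)
    {γ : ℝ → V} {J : Set ℝ} (hJ : Convex ℝ J) (hγ : ContinuousOn γ J) {a w : V}
    (hl : ∀ s ∈ J, h (γ s) = a + s • w) :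
    LipschitzOnWith (Real.toNNReal (C * ‖w‖)) γ J := by
  choose e he heC using hinv
  refine hJ.lipschitzOnWith_of_nnnorm_hasDerivWithin_le (f' := fun s => (e (γ s)).symm w)
    (fun s hsJ => had_deriv hs hγ hl hsJ (he _)) (fun s _ => ?_)
  rw [← NNReal.coe_le_coe, coe_nnnorm]
  refine le_trans ?_ (Real.le_coe_toNNReal _)
  exact ((e (γ s)).symm : V →L[ℝ] V).le_of_opNorm_le (heC _) w

lemma had_unique {h : V → V} (hloc : IsLocalHomeomorph h)
    {γ γ' : ℝ → V} {J : Set ℝ} (hJ : IsPreconnected J) (hγ : ContinuousOn γ J)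
    (hγ' : ContinuousOn γ' J) (he : ∀ s ∈ J, h (γ s) = h (γ' s)) {s₀ : ℝ} (h0 : s₀ ∈ J)
    (h00 : γ s₀ = γ' s₀) : ∀ s ∈ J, γ s = γ' s :=
  (T2Space.isSeparatedMap h).eqOn_of_comp_eqOn hloc.isLocallyInjective hJ hγ hγ' he h0 h00

/-- Segments lift through a local diffeomorphism with uniformly bounded inverse derivative. -/
lemma had_lift {h : V → V} (hs : ContDiff ℝ 1 h) {C : ℝ}
    (hinv : ∀ x, ∃ e : V ≃L[ℝ] V, (e : V →L[ℝ] V) = fderiv ℝ h x ∧ ‖(e.symm : V →L[ℝ] V)‖ ≤ C)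
    (x w : V) : ∃ γ : ℝ → V, ContinuousOn γ (Set.Icc 0 1) ∧ γ 0 = x ∧
      ∀ s ∈ Set.Icc (0:ℝ) 1, h (γ s) = h x + s • w := by
  have hloc : IsLocalHomeomorph h := had_localHomeo hs fun x => (hinv x).imp fun e he => he.1
  set S : Set ℝ := {t | ∃ γ : ℝ → V, ContinuousOn γ (Set.Icc 0 t) ∧ γ 0 = x ∧
      ∀ s ∈ Set.Icc (0:ℝ) t, h (γ s) = h x + s • w} with hS
  have hmono : ∀ t ∈ S, ∀ t' ≤ t, t' ∈ S := by
    rintro t ⟨γ, h1, h2, h3⟩ t' ht'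
    exact ⟨γ, h1.mono (Set.Icc_subset_Icc_right ht'), h2,
      fun s hs => h3 s (Set.Icc_subset_Icc_right ht' hs)⟩
  have hclosed : ∀ t, 0 < t → (∀ t' < t, t' ∈ S) → t ∈ S := by
    intro t ht0 hlt
    choose! γ h1 h2 h3 using hlt
    have hagree : ∀ t' < t, ∀ s ∈ Set.Icc 0 t', γ s s = γ t' s := by
      intro t' ht' s hs'
      have hst : s < t := hs'.2.trans_lt ht'
      refine had_unique hloc (J := Set.Icc 0 s) isPreconnected_Icc (h1 s hst)
        ((h1 t' ht').mono (Set.Icc_subset_Icc_right hs'.2)) ?_ (s₀ := 0) ⟨le_rfl, hs'.1⟩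
        (by rw [h2 s hst, h2 t' ht']) s ⟨hs'.1, le_rfl⟩
      intro u hu
      rw [h3 s hst u hu, h3 t' ht' u ⟨hu.1, hu.2.trans hs'.2⟩]
    have hc : ContinuousOn (fun s => γ s s) (Set.Ico 0 t) := by
      intro s hs'
      obtain ⟨t', hst', ht't⟩ := exists_between hs'.2
      have hc1 : ContinuousWithinAt (fun s => γ s s) (Set.Icc 0 t') s := by
        refine ((h1 t' ht't) s ⟨hs'.1, hst'.le⟩).congr (fun u hu => hagree t' ht't u hu)
          (hagree t' ht't s ⟨hs'.1, hst'.le⟩)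
      refine hc1.mono_of_mem_nhdsWithin ?_
      have : Set.Iio t' ∈ nhds s := Iio_mem_nhds hst'
      filter_upwards [mem_nhdsWithin_of_mem_nhds this, self_mem_nhdsWithin] with u hu1 hu2
      exact ⟨hu2.1, le_of_lt hu1⟩
    have hlift : ∀ s ∈ Set.Ico 0 t, h (γ s s) = h x + s • w :=
      fun s hs' => h3 s hs'.2 s ⟨hs'.1, le_rfl⟩
    obtain ⟨g, hg, hgeq⟩ :=
      (had_lip hs hinv (convex_Ico 0 t) hc hlift).extend_finite_dimension
    refine ⟨g, hg.continuous.continuousOn, ?_, ?_⟩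
    · rw [← hgeq ⟨le_rfl, ht0⟩]; exact h2 0 ht0
    · have hcl : closure (Set.Ico 0 t) = Set.Icc 0 t := closure_Ico ht0.ne
      rw [← hcl]
      have : IsClosed {s : ℝ | h (g s) = h x + s • w} :=
        isClosed_eq (hs.continuous.comp hg.continuous) (by fun_prop)
      refine closure_minimal ?_ this
      intro s hs'
      have h4 := hgeq hs'
      change h (g s) = h x + s • w
      rw [← h4]; exact hlift s hs'
  have h0S : (0:ℝ) ∈ S := ⟨fun _ => x, continuousOn_const, rfl, by
    rintro s ⟨h1, h2⟩
    have : s = 0 := le_antisymm h2 h1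
    simp [this]⟩
  have hSclosed : IsClosed (S ∩ Set.Icc 0 1) := by
    have : S ∩ Set.Icc 0 1 = closure (S ∩ Set.Icc 0 1) := by
      refine Set.Subset.antisymm subset_closure ?_
      intro t ht
      have htI : t ∈ Set.Icc (0:ℝ) 1 := closure_minimal Set.inter_subset_right isClosed_Icc ht
      refine ⟨?_, htI⟩
      rcases htI.1.eq_or_lt with h0 | h0
      · rw [← h0]; exact h0S
      refine hclosed t h0 ?_
      intro t' ht'
      obtain ⟨u, hu1, hu2⟩ := mem_closure_iff.1 ht (Set.Ioi t') isOpen_Ioi ht'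
      exact hmono u hu2.1 t' (le_of_lt hu1)
    rw [this]; exact isClosed_closure
  have key : Set.Icc (0:ℝ) 1 ⊆ S := by
    refine hSclosed.Icc_subset_of_forall_exists_gt h0S ?_
    rintro t ⟨⟨γ, h1, h2, h3⟩, ht0, ht1⟩ y hy
    obtain ⟨e, hes, hee⟩ := hloc (γ t)
    have hc : Continuous (fun s : ℝ => h x + s • w) := by fun_prop
    have htt : h x + t • w = e (γ t) := by rw [← h3 t ⟨ht0, le_rfl⟩, hee]
    have hopen : (fun s : ℝ => h x + s • w) ⁻¹' e.target ∈ nhds t := by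
      refine (e.open_target.preimage hc).mem_nhds ?_
      simp only [Set.mem_preimage]
      rw [htt]; exact e.map_source hes
    obtain ⟨δ, hδ, hball⟩ := Metric.mem_nhds_iff.1 hopen
    obtain ⟨t', ht1', ht2'⟩ := exists_between (lt_min (show t < t + δ by linarith) (hy : t < y))
    have hsub : ∀ s ∈ Set.Icc t t', h x + s • w ∈ e.target := by
      intro s hs'
      apply hball
      rw [Metric.mem_ball, Real.dist_eq, abs_of_nonneg (by linarith [hs'.1])]
      linarith [hs'.2, (lt_min_iff.1 ht2').1]
    refine ⟨t', ⟨fun s => if s ≤ t then γ s else e.symm (h x + s • w), ?_, ?_, ?_⟩,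
      ht1', (lt_min_iff.1 ht2').2.le⟩
    · refine ContinuousOn.if ?_ ?_ ?_
      · rintro a ⟨-, ha⟩
        have : a = t := by
          have := frontier_le_subset_eq continuous_id continuous_const ha
          simpa using this
        subst this
        rw [htt, e.left_inv hes]
      · refine h1.mono ?_
        rintro a ⟨ha1, ha2⟩
        have := closure_le_eq (continuous_id (X := ℝ)) (continuous_const (y := t)) 
        simp only [id] at this
        rw [this] at ha2
        exact ⟨ha1.1, ha2⟩
      · refine ContinuousOn.comp (t := e.target) e.continuousOn_symm hc.continuousOn ?_
        rintro a ⟨ha1, ha2⟩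
        refine hsub a ⟨?_, ha1.2⟩
        have : closure {a : ℝ | ¬ a ≤ t} ⊆ Set.Ici t := by
          refine closure_minimal ?_ isClosed_Ici
          intro b hb
          exact le_of_lt (not_le.1 hb)
        exact this ha2
    · simp [ht0, h2]
    · intro s hs'
      by_cases hst : s ≤ t
      · simp only [hst, if_true]; exact h3 s ⟨hs'.1, hst⟩
      · simp only [hst, if_false]
        have := e.right_inv (hsub s ⟨le_of_not_ge hst, hs'.2⟩)
        rw [← hee] at this
        exact this
  exact key ⟨zero_le_one, le_rfl⟩

/-- Hadamard's global inverse function theorem (bijectivity part). -/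
lemma had_section {h : V → V} (hs : ContDiff ℝ 1 h) {C : ℝ}
    (hinv : ∀ x, ∃ e : V ≃L[ℝ] V, (e : V →L[ℝ] V) = fderiv ℝ h x ∧ ‖(e.symm : V →L[ℝ] V)‖ ≤ C) :
    ∃ g : V → V, Continuous g ∧ (∀ x, g (h x) = x) ∧ ∀ y, h (g y) = y := by
  have hloc : IsLocalHomeomorph h := had_localHomeo hs fun x => (hinv x).imp fun e he => he.1
  choose γ h1 h2 h3 using fun a : V => had_lift hs hinv 0 (a - h 0)
  let G : unitInterval × V → V := fun q => γ q.2 q.1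
  let f : C(unitInterval × V, V) := ⟨fun q => h 0 + (q.1 : ℝ) • (q.2 - h 0), by fun_prop⟩
  have hG : Continuous G := by
    refine hloc.continuous_lift (T2Space.isSeparatedMap h) f ?_ ?_ ?_
    · ext1 q
      exact h3 q.2 q.1 q.1.2
    · have : (fun a : V => G (0, a)) = fun _ => 0 := by
        ext1 a; exact h2 a
      change Continuous (fun a : V => G (0, a))
      rw [this]; exact continuous_const
    · intro a
      exact continuousOn_iff_continuous_domRestrict.1 (h1 a)
  let g : V → V := fun a => G (1, a)
  have hg : Continuous g := hG.comp (by fun_prop)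
  have hhg : ∀ y, h (g y) = y := by
    intro y
    have := h3 y 1 ⟨zero_le_one, le_rfl⟩
    change h (γ y 1) = y
    rw [this]; simp
  refine ⟨g, hg, ?_, hhg⟩
  have hg0 : g (h 0) = 0 := by
    have := had_unique hloc (J := Set.Icc (0:ℝ) 1) isPreconnected_Icc (h1 (h 0))
      (γ' := fun _ => 0) continuousOn_const ?_ (s₀ := 0) ⟨le_rfl, zero_le_one⟩ (h2 _) 1
      ⟨zero_le_one, le_rfl⟩
    · exact this
    · intro s hs'
      rw [h3 _ s hs']; simp
  have := (T2Space.isSeparatedMap h).eq_of_comp_eq hloc.isLocallyInjective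
    (hg.comp hs.continuous) continuous_id (by ext1 y; simp [hhg]) 0 (by simpa using hg0)
  intro x
  exact congrFun this x

lemma had_inverse {h : V → V} (hs : ContDiff ℝ 1 h) {C : ℝ}
    (hinv : ∀ x, ∃ e : V ≃L[ℝ] V, (e : V →L[ℝ] V) = fderiv ℝ h x ∧ ‖(e.symm : V →L[ℝ] V)‖ ≤ C) :
    ∃ g : V → V, Continuous g ∧ (∀ x, g (h x) = x) ∧ (∀ y, h (g y) = y) ∧
      ∀ y, ∃ e : V ≃L[ℝ] V, (e : V →L[ℝ] V) = fderiv ℝ h (g y) ∧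
        HasFDerivAt g (e.symm : V →L[ℝ] V) y := by
  obtain ⟨g, hg, hgh, hhg⟩ := had_section hs hinv
  refine ⟨g, hg, hgh, hhg, fun y => ?_⟩
  obtain ⟨e, he, -⟩ := hinv (g y)
  exact ⟨e, he, HasFDerivAt.of_local_left_inverse hg.continuousAt
    (had_strict hs he).hasFDerivAt (Filter.Eventually.of_forall hhg)⟩

end Hadamard

section Stability

/-- The Markov operator of the iterated function system. -/
def ifsOp {X : Type*} {k : ℕ} (h : Fin k → X → X) (p : Fin k → X → ℝ) (f : X → ℝ) : X → ℝ :=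
  fun x => ∑ i, p i x * f (h i x)

lemma coa_power {X : Type*} [MetricSpace X] {k : ℕ} {h : Fin k → X → X} {p : Fin k → X → ℝ}
    {M δ b α : ℝ} (hM : 0 ≤ M) (hδ : 0 < δ) (hb : 0 < b) (hα : 0 < α)
    (hlip : ∀ i x y, dist (h i x) (h i y) ≤ Real.exp M * dist x y)
    (hp : ∀ i x, δ ≤ p i x) (hsum : ∀ x, ∑ i, p i x = 1)
    (hcoa : ∀ x y, x ≠ y → ∑ j, p j x * Real.log (dist (h j x) (h j y) / dist x y) < -b) :
    ∃ ε ρ : ℝ, 0 < ε ∧ ε ≤ α ∧ 0 < ρ ∧ ρ < 1 ∧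
      ∀ x y, ∑ j, p j x * dist (h j x) (h j y) ^ ε ≤ ρ * dist x y ^ ε := by
  set B : ℝ := M + (M + b) / δ + 1 with hB
  have hB0 : 0 < B := by positivity
  have hBM : M ≤ B := by
    have : 0 ≤ (M + b) / δ := by positivity
    linarith
  have hBδ : M + b ≤ δ * B := by
    have : δ * ((M + b) / δ) = M + b := by field_simp
    nlinarith
  set ε : ℝ := min α (min (1 / B) (b / (2 * B ^ 2))) with hε
  have hε0 : 0 < ε := by
    refine lt_min hα (lt_min ?_ ?_) <;> positivity
  have hεα : ε ≤ α := min_le_left _ _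
  have hεB : ε * B ≤ 1 := by
    have : ε ≤ 1 / B := (min_le_right _ _).trans (min_le_left _ _)
    rwa [le_div_iff₀ hB0] at this
  have hεb : ε * B ^ 2 ≤ b / 2 := by
    have : ε ≤ b / (2 * B ^ 2) := (min_le_right _ _).trans (min_le_right _ _)
    rw [le_div_iff₀ (by positivity)] at this
    linarith
  refine ⟨ε, max (1 - ε * b / 2) (1 / 2), hε0, hεα, lt_max_of_lt_right (by norm_num),
    max_lt (by nlinarith [mul_pos hε0 hb]) (by norm_num), ?_⟩
  intro x y
  rcases eq_or_ne x y with rfl | hxy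
  · simp [Real.zero_rpow hε0.ne']
  have hd : 0 < dist x y := dist_pos.2 hxy
  have hp0 : ∀ i x, 0 ≤ p i x := fun i x => hδ.le.trans (hp i x)
  set r : Fin k → ℝ := fun j => dist (h j x) (h j y) / dist x y with hr
  have hr0 : ∀ j, 0 ≤ r j := fun j => by positivity
  have hrM : ∀ j, r j ≤ Real.exp M := fun j => by
    rw [hr]; simp only; rw [div_le_iff₀ hd]; exact hlip j x y
  set L : Fin k → ℝ := fun j => if r j < Real.exp (-B) then -B else Real.log (r j) with hL
  have hLM : ∀ j, L j ≤ M := by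
    intro j; simp only [hL]; split_ifs with hh
    · linarith
    · have h1 : 0 < r j := (Real.exp_pos _).trans_le (not_lt.1 hh)
      rw [Real.log_le_iff_le_exp h1]; exact hrM j
  have hLB : ∀ j, -B ≤ L j := by
    intro j; simp only [hL]; split_ifs with hh
    · exact le_rfl
    · have h1 : 0 < r j := (Real.exp_pos _).trans_le (not_lt.1 hh)
      rw [Real.le_log_iff_exp_le h1]; exact not_lt.1 hh
  have hrL : ∀ j, r j ≤ Real.exp (L j) := by
    intro j; simp only [hL]; split_ifs with hh
    · exact hh.le
    · have h1 : 0 < r j := (Real.exp_pos _).trans_le (not_lt.1 hh)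
      rw [Real.exp_log h1]
  have hLsum : ∑ j, p j x * L j ≤ -b := by
    by_cases hh : ∃ j, r j < Real.exp (-B)
    · obtain ⟨j, hj⟩ := hh
      have hLj : L j = -B := by simp only [hL]; rw [if_pos hj]
      rw [← Finset.add_sum_erase _ _ (Finset.mem_univ j)]
      have h1 : ∑ i ∈ Finset.univ.erase j, p i x * L i ≤ ∑ i ∈ Finset.univ.erase j, p i x * M :=
        Finset.sum_le_sum fun i _ => mul_le_mul_of_nonneg_left (hLM i) (hp0 i x)
      rw [← Finset.sum_mul] at h1
      have h2 : ∑ i ∈ Finset.univ.erase j, p i x ≤ 1 := by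
        rw [← hsum x]
        exact Finset.sum_le_sum_of_subset_of_nonneg (Finset.erase_subset _ _)
          fun i _ _ => hp0 i x
      rw [hLj]
      nlinarith [hp j x]
    · push Not at hh
      have : ∀ j, L j = Real.log (r j) := by
        intro j; simp only [hL]; rw [if_neg (not_lt.2 (hh j))]
      simp only [this]
      exact (hcoa x y hxy).le
  have hmain : ∑ j, p j x * r j ^ ε ≤ 1 - ε * b / 2 := by
    have h1 : ∀ j, r j ^ ε ≤ 1 + ε * L j + ε ^ 2 * B ^ 2 := by
      intro j
      have h2 : r j ^ ε ≤ Real.exp (ε * L j) := by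
        calc r j ^ ε ≤ (Real.exp (L j)) ^ ε := Real.rpow_le_rpow (hr0 j) (hrL j) hε0.le
          _ = Real.exp (ε * L j) := by rw [← Real.exp_mul, mul_comm]
      have habs : |L j| ≤ B := abs_le.2 ⟨hLB j, (hLM j).trans hBM⟩
      have h3 : |ε * L j| ≤ 1 := by
        rw [abs_mul, abs_of_pos hε0]
        exact (mul_le_mul_of_nonneg_left habs hε0.le).trans hεB
      have h4 := (abs_le.1 (Real.abs_exp_sub_one_sub_id_le h3)).2
      have h5 : (L j) ^ 2 ≤ B ^ 2 := sq_le_sq' (hLB j) ((hLM j).trans hBM)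
      nlinarith [mul_le_mul_of_nonneg_left h5 (sq_nonneg ε)]
    calc ∑ j, p j x * r j ^ ε ≤ ∑ j, p j x * (1 + ε * L j + ε ^ 2 * B ^ 2) :=
          Finset.sum_le_sum fun j _ => mul_le_mul_of_nonneg_left (h1 j) (hp0 j x)
      _ = (∑ j, p j x) * (1 + ε ^ 2 * B ^ 2) + ε * ∑ j, p j x * L j := by
          rw [Finset.sum_mul, Finset.mul_sum, ← Finset.sum_add_distrib]
          exact Finset.sum_congr rfl fun j _ => by ring
      _ ≤ 1 - ε * b / 2 := by
          rw [hsum]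
          nlinarith [mul_le_mul_of_nonneg_left hεb hε0.le]
  calc ∑ j, p j x * dist (h j x) (h j y) ^ ε = (∑ j, p j x * r j ^ ε) * dist x y ^ ε := by
        rw [Finset.sum_mul]
        refine Finset.sum_congr rfl fun j _ => ?_
        have : dist (h j x) (h j y) = r j * dist x y := by simp only [hr]; field_simp
        rw [this, Real.mul_rpow (hr0 j) hd.le]; ring
    _ ≤ _ := by
        refine mul_le_mul_of_nonneg_right (hmain.trans (le_max_left _ _)) ?_
        positivity

lemma ifs_stable {X : Type*} [MetricSpace X] {k : ℕ} {h : Fin k → X → X} {p : Fin k → X → ℝ}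
    {δ ε ρ H F A : ℝ} (o : X) (hδ : 0 < δ) (hε0 : 0 < ε) (hε1 : ε ≤ 1) (hρ0 : 0 < ρ) (hρ1 : ρ < 1)
    (hp : ∀ i x, δ ≤ p i x) (hsum : ∀ x, ∑ i, p i x = 1)
    (hcon : ∀ x y, ∑ j, p j x * dist (h j x) (h j y) ^ ε ≤ ρ * dist x y ^ ε)
    (hH : ∀ x y, ∑ i, |p i x - p i y| ≤ H * dist x y ^ ε)
    {f : X → ℝ} (hF : ∀ x, |f x| ≤ F) (hA : ∀ x y, |f x - f y| ≤ A * dist x y ^ ε) (x y : X) :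
    Tendsto (fun n => (ifsOp h p)^[n] f x - (ifsOp h p)^[n] f y) atTop (nhds 0) := by
  have hp0 : ∀ i x, 0 ≤ p i x := fun i x => hδ.le.trans (hp i x)
  have hF0 : 0 ≤ F := (abs_nonneg _).trans (hF o)
  have hρ' : 0 < 1 - ρ := by linarith
  -- equicontinuity
  set A' : ℝ := max (max A (H * F / (1 - ρ))) 0 with hA'
  have hA'0 : 0 ≤ A' := le_max_right _ _
  have hA'H : H * F ≤ A' * (1 - ρ) := by
    rw [← div_le_iff₀ hρ']
    exact (le_max_right _ _).trans (le_max_left _ _)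
  have hdpos : ∀ x y : X, 0 ≤ dist x y ^ ε := fun x y => by positivity
  have hLY : ∀ n : ℕ, (∀ x, |(ifsOp h p)^[n] f x| ≤ F) ∧
      ∀ x y, |(ifsOp h p)^[n] f x - (ifsOp h p)^[n] f y| ≤ A' * dist x y ^ ε := by
    intro n
    induction n with
    | zero =>
      refine ⟨hF, fun x y => (hA x y).trans ?_⟩
      exact mul_le_mul_of_nonneg_right ((le_max_left _ _).trans (le_max_left _ _)) (hdpos x y)
    | succ n ih =>
      rw [Function.iterate_succ_apply']
      set g := (ifsOp h p)^[n] f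
      obtain ⟨ih1, ih2⟩ := ih
      constructor
      · intro x
        calc |∑ i, p i x * g (h i x)| ≤ ∑ i, |p i x * g (h i x)| := Finset.abs_sum_le_sum_abs _ _
          _ ≤ ∑ i, p i x * F := Finset.sum_le_sum fun i _ => by
              rw [abs_mul, abs_of_nonneg (hp0 i x)]
              exact mul_le_mul_of_nonneg_left (ih1 _) (hp0 i x)
          _ = F := by rw [← Finset.sum_mul, hsum, one_mul]
      · intro x y
        have e1 : ifsOp h p g x - ifsOp h p g y =
            ∑ i, (p i x * (g (h i x) - g (h i y)) + (p i x - p i y) * g (h i y)) := by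
          simp only [ifsOp]
          rw [← Finset.sum_sub_distrib]
          exact Finset.sum_congr rfl fun i _ => by ring
        rw [e1]
        calc |∑ i, (p i x * (g (h i x) - g (h i y)) + (p i x - p i y) * g (h i y))|
            ≤ ∑ i, |p i x * (g (h i x) - g (h i y)) + (p i x - p i y) * g (h i y)| :=
              Finset.abs_sum_le_sum_abs _ _
          _ ≤ ∑ i, (A' * (p i x * dist (h i x) (h i y) ^ ε) + |p i x - p i y| * F) :=
              Finset.sum_le_sum fun i _ => by
                refine (abs_add_le _ _).trans (add_le_add ?_ ?_)
                · rw [abs_mul, abs_of_nonneg (hp0 i x)]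
                  have := mul_le_mul_of_nonneg_left (ih2 (h i x) (h i y)) (hp0 i x)
                  linarith
                · rw [abs_mul]
                  exact mul_le_mul_of_nonneg_left (ih1 _) (abs_nonneg _)
          _ = A' * (∑ i, p i x * dist (h i x) (h i y) ^ ε) + (∑ i, |p i x - p i y|) * F := by
              rw [Finset.sum_add_distrib, Finset.mul_sum, Finset.sum_mul]
          _ ≤ A' * (ρ * dist x y ^ ε) + (H * dist x y ^ ε) * F :=
              add_le_add (mul_le_mul_of_nonneg_left (hcon x y) hA'0)
                (mul_le_mul_of_nonneg_right (hH x y) hF0)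
          _ ≤ A' * dist x y ^ ε := by nlinarith [hdpos x y]
  -- asymptotic bounds
  let W : X → X → ℝ → Prop := fun x y a => ∀ a' > a, ∀ᶠ n in atTop,
    |(ifsOp h p)^[n] f x - (ifsOp h p)^[n] f y| ≤ a'
  have Wmono : ∀ {x y a b}, W x y a → a ≤ b → W x y b :=
    fun hw hab a' ha' => hw a' (hab.trans_lt ha')
  have Wstep : ∀ (x y : X) (a : Fin k → Fin k → ℝ), (∀ i j, W (h i x) (h j y) (a i j)) →
      W x y (∑ i, ∑ j, p i x * p j y * a i j) := by
    intro x y a hw a' ha'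
    set η := a' - ∑ i, ∑ j, p i x * p j y * a i j with hη
    have hη0 : 0 < η := by simp only [hη]; linarith
    have h1 : ∀ᶠ n in atTop, ∀ i j,
        |(ifsOp h p)^[n] f (h i x) - (ifsOp h p)^[n] f (h j y)| ≤ a i j + η :=
      eventually_all.2 fun i => eventually_all.2 fun j => hw i j _ (by linarith)
    have h2 : ∀ᶠ n in atTop, |(ifsOp h p)^[n+1] f x - (ifsOp h p)^[n+1] f y| ≤ a' := by
      filter_upwards [h1] with n hn
      rw [Function.iterate_succ_apply']
      set g := (ifsOp h p)^[n] f
      have e1 : ifsOp h p g x - ifsOp h p g y =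
          ∑ i, ∑ j, p i x * p j y * (g (h i x) - g (h j y)) := by
        have e2 : ifsOp h p g x = ∑ i, ∑ j, p i x * p j y * g (h i x) := by
          simp only [ifsOp]
          refine Finset.sum_congr rfl fun i _ => ?_
          have : ∑ j, p i x * p j y * g (h i x) = (∑ j, p j y) * (p i x * g (h i x)) := by
            rw [Finset.sum_mul]; exact Finset.sum_congr rfl fun j _ => by ring
          rw [this, hsum, one_mul]
        have e3 : ifsOp h p g y = ∑ i, ∑ j, p i x * p j y * g (h j y) := by
          rw [Finset.sum_comm]
          simp only [ifsOp]
          refine Finset.sum_congr rfl fun i _ => ?_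
          have : ∑ j, p j x * p i y * g (h i y) = (∑ j, p j x) * (p i y * g (h i y)) := by
            rw [Finset.sum_mul]; exact Finset.sum_congr rfl fun j _ => by ring
          rw [this, hsum, one_mul]
        rw [e2, e3, ← Finset.sum_sub_distrib]
        refine Finset.sum_congr rfl fun i _ => ?_
        rw [← Finset.sum_sub_distrib]
        exact Finset.sum_congr rfl fun j _ => by ring
      rw [e1]
      calc |∑ i, ∑ j, p i x * p j y * (g (h i x) - g (h j y))|
          ≤ ∑ i, ∑ j, |p i x * p j y * (g (h i x) - g (h j y))| :=
            (Finset.abs_sum_le_sum_abs _ _).trans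
              (Finset.sum_le_sum fun i _ => Finset.abs_sum_le_sum_abs _ _)
        _ ≤ ∑ i, ∑ j, p i x * p j y * (a i j + η) :=
            Finset.sum_le_sum fun i _ => Finset.sum_le_sum fun j _ => by
              have h0 : 0 ≤ p i x * p j y := mul_nonneg (hp0 _ _) (hp0 _ _)
              rw [abs_mul, abs_of_nonneg h0]
              exact mul_le_mul_of_nonneg_left (hn i j) h0
        _ = (∑ i, ∑ j, p i x * p j y * a i j) + (∑ i, p i x) * (∑ j, p j y) * η := by
            rw [Finset.sum_mul_sum]
            simp only [mul_add, Finset.sum_add_distrib, Finset.sum_mul]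
        _ = a' := by rw [hsum, hsum]; simp only [hη]; ring
    obtain ⟨N, hN⟩ := eventually_atTop.1 h2
    refine eventually_atTop.2 ⟨N + 1, fun n hn => ?_⟩
    obtain ⟨m, rfl⟩ : ∃ m, n = m + 1 := ⟨n - 1, by omega⟩
    exact hN m (by omega)
  have Wclose : ∀ x y a, A' * dist x y ^ ε ≤ a → W x y a := fun x y a hd a' ha' =>
    Eventually.of_forall fun n => ((hLY n).2 x y).trans (hd.trans ha'.le)
  let V : X → ℝ := fun x => dist x o ^ ε
  have hV0 : ∀ x, 0 ≤ V x := fun x => hdpos x o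
  have hdV : ∀ x y, dist x y ^ ε ≤ V x + V y := by
    intro x y
    refine (Real.rpow_le_rpow dist_nonneg (dist_triangle_right x y o) hε0.le).trans ?_
    exact Real.rpow_add_le_add_rpow dist_nonneg dist_nonneg hε0.le hε1
  set C : ℝ := ∑ i, dist (h i o) o ^ ε with hC
  have hC0 : 0 ≤ C := Finset.sum_nonneg fun i _ => by positivity
  have hple : ∀ i x, p i x ≤ 1 := by
    intro i x
    rw [← hsum x]
    exact Finset.single_le_sum (fun i _ => hp0 i x) (Finset.mem_univ i)
  have hPV : ∀ x, ∑ i, p i x * V (h i x) ≤ ρ * V x + C := by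
    intro x
    calc ∑ i, p i x * V (h i x)
        ≤ ∑ i, (p i x * dist (h i x) (h i o) ^ ε + dist (h i o) o ^ ε) :=
          Finset.sum_le_sum fun i _ => by
            have h1 : V (h i x) ≤ dist (h i x) (h i o) ^ ε + dist (h i o) o ^ ε := by
              refine (Real.rpow_le_rpow dist_nonneg (dist_triangle _ (h i o) _) hε0.le).trans ?_
              exact Real.rpow_add_le_add_rpow dist_nonneg dist_nonneg hε0.le hε1
            have h2 : 0 ≤ dist (h i o) o ^ ε := hdpos _ _
            nlinarith [mul_le_mul_of_nonneg_left h1 (hp0 i x), hple i x,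
              mul_le_mul_of_nonneg_right (hple i x) h2]
      _ ≤ ρ * V x + C := by
          rw [Finset.sum_add_distrib]
          exact add_le_add (hcon x o) le_rfl
  set V0 : ℝ := C / (1 - ρ) with hV0def
  have hV00 : 0 ≤ V0 := by positivity
  have hV0C : V0 * (1 - ρ) = C := by simp only [hV0def]; field_simp
  -- improvement
  have improve : ∀ D > 0, (∀ x y, W x y D) → ∃ c > 0, ∀ x y, W x y (D * (1 - c)) := by
    intro D hD hW
    have step2 : ∀ N : ℕ, ∀ x y, A' * (ρ ^ N * dist x y ^ ε) ≤ D / 2 →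
        W x y (D - (δ ^ 2) ^ N * (D / 2)) := by
      intro N
      induction N with
      | zero =>
        intro x y hxy
        refine Wclose x y _ ?_
        simp only [pow_zero, one_mul] at hxy ⊢
        linarith
      | succ N ih =>
        intro x y hxy
        obtain ⟨i, hi⟩ : ∃ i, dist (h i x) (h i y) ^ ε ≤ ρ * dist x y ^ ε := by
          by_contra hcon'
          push Not at hcon'
          have hne : (Finset.univ : Finset (Fin k)).Nonempty := by
            rw [Finset.nonempty_iff_ne_empty]
            intro he
            have := hsum x
            rw [he] at this
            simp at this
          have h1 : ∑ i, p i x * (ρ * dist x y ^ ε) < ∑ i, p i x * dist (h i x) (h i y) ^ ε :=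
            Finset.sum_lt_sum_of_nonempty hne fun i _ =>
              mul_lt_mul_of_pos_left (hcon' i) (hδ.trans_le (hp i x))
          rw [← Finset.sum_mul, hsum, one_mul] at h1
          exact absurd (hcon x y) (not_le.2 h1)
        have h1 := ih (h i x) (h i y) (by
          refine le_trans (mul_le_mul_of_nonneg_left ?_ hA'0) hxy
          have := mul_le_mul_of_nonneg_left hi (pow_pos hρ0 N).le
          rw [pow_succ]; linarith)
        set q := (δ ^ 2) ^ N * (D / 2) with hq
        have hq0 : 0 ≤ q := by positivity
        have h2 := Wstep x y (fun i' j' => D - if i' = i ∧ j' = i then q else 0) (by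
          intro i' j'
          by_cases hh : i' = i ∧ j' = i
          · simp only [hh, and_self, if_true]; exact h1
          · simp only [hh, if_false, sub_zero]; exact hW _ _)
        refine Wmono h2 ?_
        have e1 : ∑ i', ∑ j', p i' x * p j' y * (D - if i' = i ∧ j' = i then q else 0) =
            (∑ i', p i' x) * (∑ j', p j' y) * D - p i x * p i y * q := by
          rw [Finset.sum_mul_sum]
          simp only [mul_sub, Finset.sum_sub_distrib, Finset.sum_mul]
          congr 1
          rw [Finset.sum_eq_single i, Finset.sum_eq_single i]
          · simp
          · intro b _ hb; simp [hb]
          · simp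
          · intro b _ hb; simp [hb]
          · simp
        rw [e1, hsum, hsum, one_mul, one_mul, pow_succ]
        have h3 : δ ^ 2 ≤ p i x * p i y := by
          rw [sq]; exact mul_le_mul (hp i x) (hp i y) hδ.le (hp0 i x)
        have := mul_le_mul_of_nonneg_right h3 hq0
        simp only [hq] at this ⊢
        linarith
    set Λ : ℝ := 4 * V0 + 1 with hΛ
    have hΛ0 : 0 < Λ := by positivity
    obtain ⟨N, hN⟩ : ∃ N : ℕ, A' * (ρ ^ N * Λ) ≤ D / 2 := by
      have : Tendsto (fun N : ℕ => A' * (ρ ^ N * Λ)) atTop (nhds (A' * (0 * Λ))) :=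
        ((tendsto_pow_atTop_nhds_zero_of_lt_one hρ0.le hρ1).mul_const Λ).const_mul A'
      simp only [zero_mul, mul_zero] at this
      exact ((this.eventually (gt_mem_nhds (half_pos hD))).exists).imp fun N hN => hN.le
    set c : ℝ := (δ ^ 2) ^ N / 2 with hc
    have hc0 : 0 < c := by positivity
    have step3 : ∀ x y, W x y (D * (1 - c) + c * D / Λ * (V x + V y)) := by
      intro x y
      by_cases hxy : V x + V y ≤ Λ
      · have h1 := step2 N x y (le_trans (mul_le_mul_of_nonneg_left
          (mul_le_mul_of_nonneg_left ((hdV x y).trans hxy) (pow_pos hρ0 N).le) hA'0) hN)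
        refine Wmono h1 ?_
        have : 0 ≤ c * D / Λ * (V x + V y) :=
          mul_nonneg (by positivity) (add_nonneg (hV0 x) (hV0 y))
        have h2 : (δ ^ 2) ^ N * (D / 2) = c * D := by simp only [hc]; ring
        rw [h2]; linarith
      · refine Wmono (hW x y) ?_
        have h1 : c * D / Λ * Λ ≤ c * D / Λ * (V x + V y) :=
          mul_le_mul_of_nonneg_left (not_le.1 hxy).le (by positivity)
        have h2 : c * D / Λ * Λ = c * D := by field_simp
        linarith
    set κ : ℝ := c * D / Λ with hκ
    have hκ0 : 0 ≤ κ := by positivity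
    have step4 : ∀ n : ℕ, ∀ x y,
        W x y (D * (1 - c) + κ * (ρ ^ n * (V x + V y - 2 * V0) + 2 * V0)) := by
      intro n
      induction n with
      | zero =>
        intro x y
        refine Wmono (step3 x y) (le_of_eq ?_)
        ring
      | succ n ih =>
        intro x y
        refine Wmono (Wstep x y _ fun i j => ih (h i x) (h j y)) ?_
        have e1 : ∑ i, ∑ j, p i x * p j y *
            (D * (1 - c) + κ * (ρ ^ n * (V (h i x) + V (h j y) - 2 * V0) + 2 * V0)) =
            (∑ i, p i x) * (∑ j, p j y) * (D * (1 - c) + κ * (ρ ^ n * (- 2 * V0) + 2 * V0)) +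
            κ * ρ ^ n * ((∑ i, p i x * V (h i x)) * (∑ j, p j y) +
              (∑ i, p i x) * (∑ j, p j y * V (h j y))) := by
          rw [Finset.sum_mul_sum, Finset.sum_mul_sum, Finset.sum_mul_sum]
          simp only [Finset.sum_mul, Finset.mul_sum, ← Finset.sum_add_distrib]
          exact Finset.sum_congr rfl fun i _ => Finset.sum_congr rfl fun j _ => by ring
        rw [e1, hsum, hsum]
        have h1 : κ * ρ ^ n * (∑ i, p i x * V (h i x) + ∑ j, p j y * V (h j y)) ≤
            κ * ρ ^ n * ((ρ * V x + C) + (ρ * V y + C)) :=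
          mul_le_mul_of_nonneg_left (add_le_add (hPV x) (hPV y)) (by positivity)
        rw [← hV0C] at h1
        rw [pow_succ]
        linarith
    refine ⟨c / 2, by positivity, fun x y a' ha' => ?_⟩
    have hlim : Tendsto (fun n : ℕ => D * (1 - c) + κ * (ρ ^ n * (V x + V y - 2 * V0) + 2 * V0))
        atTop (nhds (D * (1 - c) + κ * (0 * (V x + V y - 2 * V0) + 2 * V0))) :=
      ((((tendsto_pow_atTop_nhds_zero_of_lt_one hρ0.le hρ1).mul_const _).add_const _).const_mul
        _).const_add _
    have hlt : D * (1 - c) + κ * (0 * (V x + V y - 2 * V0) + 2 * V0) < a' := by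
      refine lt_of_le_of_lt ?_ ha'
      have h1 : κ * Λ = c * D := by simp only [hκ]; field_simp
      have h2 : κ * (2 * V0) ≤ c * D / 2 := by
        rw [← h1]; simp only [hΛ]; nlinarith
      rw [zero_mul, zero_add]; linarith
    obtain ⟨n, hn⟩ := (hlim.eventually (gt_mem_nhds hlt)).exists
    exact step4 n x y a' hn
  set S : Set ℝ := {D | 0 ≤ D ∧ ∀ x y, W x y D} with hS
  have hSne : S.Nonempty := ⟨2 * F, by positivity, fun x y a' ha' =>
    Eventually.of_forall fun n => by
      refine le_trans (abs_sub _ _) ?_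
      have := (hLY n).1 x
      have := (hLY n).1 y
      linarith⟩
  have hSbdd : BddBelow S := ⟨0, fun D hD => hD.1⟩
  set D := sInf S with hD
  have hD0 : 0 ≤ D := le_csInf hSne fun D hD => hD.1
  have hWD : ∀ x y, W x y D := by
    intro x y a' ha'
    obtain ⟨D', hD', hlt⟩ := exists_lt_of_csInf_lt hSne ha'
    exact hD'.2 x y a' hlt
  have hDz : D = 0 := by
    by_contra hne
    have hDpos : 0 < D := lt_of_le_of_ne hD0 (Ne.symm hne)
    obtain ⟨c, hc, hW⟩ := improve D hDpos hWD
    have h1 : max (D * (1 - c)) 0 ∈ S :=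
      ⟨le_max_right _ _, fun x y => Wmono (hW x y) (le_max_left _ _)⟩
    have h2 : D ≤ max (D * (1 - c)) 0 := csInf_le hSbdd h1
    have h3 : max (D * (1 - c)) 0 < D := max_lt (by nlinarith) hDpos
    linarith
  rw [hDz] at hWD
  rw [Metric.tendsto_atTop]
  intro η hη
  obtain ⟨N, hN⟩ := eventually_atTop.1 (hWD x y (η / 2) (by positivity))
  refine ⟨N, fun n hn => ?_⟩
  rw [Real.dist_eq, sub_zero]
  linarith [hN n hn]

end Stability

section BirkhoffPart

variable {X : Type*} [MeasurableSpace X]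

/-- running maximum of Birkhoff sums -/
def bmax (T : X → X) (g : X → ℝ) : ℕ → X → ℝ
  | 0 => fun _ => 0
  | n + 1 => fun x => max 0 (g x + bmax T g n (T x))

lemma bmax_nonneg (T : X → X) (g : X → ℝ) (n : ℕ) (x : X) : 0 ≤ bmax T g n x := by
  cases n with
  | zero => exact le_refl _
  | succ n => exact le_max_left _ _

lemma bmax_mono (T : X → X) (g : X → ℝ) (n : ℕ) : ∀ x, bmax T g n x ≤ bmax T g (n + 1) x := by
  induction n with
  | zero => intro x; exact bmax_nonneg T g 1 x
  | succ n ih =>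
    intro x
    exact max_le_max le_rfl (by linarith [ih (T x)])

lemma birkhoff_le_bmax (T : X → X) (g : X → ℝ) (n : ℕ) :
    ∀ x, birkhoffSum T g n x ≤ bmax T g n x := by
  induction n with
  | zero => intro x; simp [bmax]
  | succ n ih =>
    intro x
    rw [birkhoffSum_succ']
    exact le_trans (by linarith [ih (T x)]) (le_max_right _ _)

lemma bmax_measurable {T : X → X} {g : X → ℝ} (hT : Measurable T) (hg : Measurable g) (n : ℕ) :
    Measurable (bmax T g n) := by
  induction n with
  | zero => exact measurable_const
  | succ n ih => exact measurable_const.max (hg.add (ih.comp hT))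

lemma bmax_le {T : X → X} {g : X → ℝ} {B : ℝ} (hB : ∀ x, |g x| ≤ B) (n : ℕ) :
    ∀ x, bmax T g n x ≤ n * B := by
  induction n with
  | zero => intro x; simp [bmax]
  | succ n ih =>
    intro x
    have hB0 : 0 ≤ B := le_trans (abs_nonneg _) (hB x)
    refine max_le (by positivity) ?_
    have := ih (T x)
    have := (abs_le.1 (hB x)).2
    push_cast
    linarith

lemma birkhoff_bdd_of_neg {T : X → X} {ν : Measure X} [IsProbabilityMeasure ν]
    (hT : Ergodic T ν) {g : X → ℝ} (hg : Measurable g) {B : ℝ} (hB : ∀ x, |g x| ≤ B)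
    (hneg : ∫ x, g x ∂ν < 0) :
    ∀ᵐ x ∂ν, ∃ C : ℝ, ∀ n, birkhoffSum T g n x ≤ C := by
  set m := bmax T g with hm
  have hmm := fun n => bmax_measurable hT.measurable hg n
  set A : Set X := {x | ∀ N : ℕ, ∃ n, (N : ℝ) < m n x} with hA
  have hAmeas : MeasurableSet A := by
    have : A = ⋂ N : ℕ, ⋃ n, {x | (N : ℝ) < m n x} := by ext x; simp [hA]
    rw [this]
    exact MeasurableSet.iInter fun N => MeasurableSet.iUnion fun n =>
      measurableSet_lt measurable_const (hmm n)
  have hmono : ∀ x, Monotone (fun n => m n x) := fun x =>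
    monotone_nat_of_le_succ fun n => bmax_mono T g n x
  have hAinv : T ⁻¹' A = A := by
    ext x
    change (∀ N : ℕ, ∃ n, (N : ℝ) < m n (T x)) ↔ (∀ N : ℕ, ∃ n, (N : ℝ) < m n x)
    constructor
    · intro H N
      obtain ⟨N', hN'⟩ := exists_nat_gt (N + B)
      obtain ⟨n, hn⟩ := H N'
      refine ⟨n + 1, lt_of_lt_of_le ?_ (le_max_right _ _)⟩
      have := (abs_le.1 (hB x)).1
      change (N : ℝ) < g x + m n (T x)
      linarith
    · intro H N
      have hB0 : 0 ≤ B := le_trans (abs_nonneg _) (hB x)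
      obtain ⟨N', hN'⟩ := exists_nat_gt (N + B)
      obtain ⟨n, hn⟩ := H N'
      refine ⟨n, ?_⟩
      have h1 : m n x ≤ m (n+1) x := bmax_mono T g n x
      have h2 : m (n+1) x = max 0 (g x + m n (T x)) := rfl
      have := (abs_le.1 (hB x)).2
      have hN0 : (0:ℝ) ≤ N := Nat.cast_nonneg N
      rcases le_total 0 (g x + m n (T x)) with h3 | h3
      · rw [max_eq_right h3] at h2
        linarith
      · rw [max_eq_left h3] at h2
        linarith
  have hzero : ν A = 0 := by
    rcases hT.toPreErgodic.measure_self_or_compl_eq_zero hAmeas hAinv with h0 | h0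
    · exact h0
    exfalso
    have hae : ∀ᵐ x ∂ν, x ∈ A := by
      rw [ae_iff]; exact h0
    have hlim : ∀ᵐ x ∂ν, Tendsto (fun n => m (n+1) x - m n (T x)) atTop (nhds (g x)) := by
      filter_upwards [hae] with x hx
      have hx' : T x ∈ A := by
        have : x ∈ T ⁻¹' A := by rw [hAinv]; exact hx
        exact this
      obtain ⟨N', hN'⟩ := exists_nat_gt B
      obtain ⟨n0, hn0⟩ := hx' N'
      refine tendsto_const_nhds.congr' ?_
      filter_upwards [eventually_ge_atTop n0] with n hn
      have h1 := hmono (T x) hn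
      have h2 : m (n+1) x = max 0 (g x + m n (T x)) := rfl
      have := (abs_le.1 (hB x)).1
      simp only at h1
      rw [h2, max_eq_right (by linarith)]
      ring
    have hbd : ∀ n, ∀ᵐ x ∂ν, ‖m (n+1) x - m n (T x)‖ ≤ B := by
      intro n
      refine Eventually.of_forall fun x => ?_
      have h2 : m (n+1) x = max 0 (g x + m n (T x)) := rfl
      have h3 := bmax_nonneg T g n (T x)
      change 0 ≤ m n (T x) at h3
      have := abs_le.1 (hB x)
      rw [h2, Real.norm_eq_abs, abs_le]
      rcases le_total 0 (g x + m n (T x)) with h3 | h3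
      · rw [max_eq_right h3]; constructor <;> linarith
      · rw [max_eq_left h3]; constructor <;> linarith
    have hT1 := tendsto_integral_of_dominated_convergence (μ := ν) (fun _ => B)
      (F := fun n x => m (n+1) x - m n (T x)) (f := g)
      (fun n => ((hmm (n+1)).sub ((hmm n).comp hT.measurable)).aestronglyMeasurable)
      (integrable_const B) hbd hlim
    have hmint : ∀ n, Integrable (m n) ν := fun n =>
      Integrable.of_bound (hmm n).aestronglyMeasurable (n * B) (Eventually.of_forall fun x => by
        rw [Real.norm_eq_abs, abs_of_nonneg (bmax_nonneg T g n x)]; exact bmax_le hB n x)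
    have hnn : ∀ n, 0 ≤ ∫ x, (m (n+1) x - m n (T x)) ∂ν := by
      intro n
      have hc : Integrable (fun x => m n (T x)) ν :=
        hT.toMeasurePreserving.integrable_comp_of_integrable (hmint n)
      rw [integral_sub (hmint (n+1)) hc]
      have e1 : ∫ x, m n (T x) ∂ν = ∫ x, m n x ∂ν := by
        have := integral_map hT.measurable.aemeasurable (f := m n) (μ := ν)
          (by rw [hT.map_eq]; exact (hmm n).aestronglyMeasurable)
        rw [hT.map_eq] at this
        exact this.symm
      rw [e1]
      have := integral_mono (hmint n) (hmint (n+1)) (fun x => bmax_mono T g n x)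
      linarith
    have := ge_of_tendsto' hT1 hnn
    linarith
  have : ∀ᵐ x ∂ν, x ∉ A := by
    rw [ae_iff]; simpa using hzero
  filter_upwards [this] with x hx
  have hx2 : ¬ (∀ N : ℕ, ∃ n, (N : ℝ) < m n x) := hx
  push Not at hx2
  obtain ⟨N, hN⟩ := hx2
  exact ⟨N, fun n => (birkhoff_le_bmax T g n x).trans (hN n)⟩

/-- two-sided consequence -/
lemma birkhoff_ge {T : X → X} {ν : Measure X} [IsProbabilityMeasure ν]
    (hT : Ergodic T ν) {g : X → ℝ} (hg : Measurable g) {B : ℝ} (hB : ∀ x, |g x| ≤ B)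
    {c : ℝ} (hneg : ∫ x, g x ∂ν < c) :
    ∀ᵐ x ∂ν, ∃ C : ℝ, ∀ n : ℕ, birkhoffSum T g n x ≤ n * c + C := by
  have hgi : Integrable g ν := Integrable.of_bound hg.aestronglyMeasurable B
    (Eventually.of_forall hB)
  have := birkhoff_bdd_of_neg hT (g := fun x => g x - c) (hg.sub_const c) (B := B + |c|)
    (fun x => (abs_sub _ _).trans (by linarith [hB x]))
    (by rw [integral_sub hgi (integrable_const c)]; simp; exact hneg)
  filter_upwards [this] with x ⟨C, hC⟩
  refine ⟨C, fun n => ?_⟩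
  have h1 := hC n
  have h2 : birkhoffSum T (fun x => g x - c) n x = birkhoffSum T g n x - n * c := by
    simp [birkhoffSum, Finset.sum_sub_distrib]
  rw [h2] at h1
  linarith

lemma birkhoff_two {T : X → X} {ν : Measure X} [IsProbabilityMeasure ν]
    (hT : Ergodic T ν) {g : X → ℝ} (hg : Measurable g) {B : ℝ} (hB : ∀ x, |g x| ≤ B)
    {η : ℝ} (hη : 0 < η) :
    ∀ᵐ x ∂ν, ∃ C : ℝ, 0 ≤ C ∧ ∀ n : ℕ, |birkhoffSum T g n x - n * ∫ x, g x ∂ν| ≤ n * η + C := by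
  have h1 := birkhoff_ge hT hg hB (c := (∫ x, g x ∂ν) + η) (by linarith)
  have h2 := birkhoff_ge hT (g := fun x => - g x) hg.neg (B := B) (fun x => by rw [abs_neg]; exact hB x)
    (c := -(∫ x, g x ∂ν) + η) (by rw [integral_neg]; linarith)
  filter_upwards [h1, h2] with x ⟨C, hC⟩ ⟨D, hD⟩
  refine ⟨max 0 (max C D), le_max_left _ _, fun n => ?_⟩
  have e1 := hC n
  have e2 := hD n
  have h2 : birkhoffSum T (fun x => - g x) n x = - birkhoffSum T g n x := by
    simp [birkhoffSum]
  rw [h2] at e2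
  have : C ≤ max 0 (max C D) := (le_max_left _ _).trans (le_max_right _ _)
  have : D ≤ max 0 (max C D) := (le_max_right _ _).trans (le_max_right _ _)
  rw [abs_le]
  constructor <;> nlinarith

end BirkhoffPart

section SysPart

set_option linter.unusedSectionVars false

/-- Data of a contracting on average IFS, with inverse branches and log-derivatives `L`. -/
structure Sys (E : Type*) [NormedAddCommGroup E] [MeasurableSpace E] [BorelSpace E]
    (k : ℕ) (ν : Measure E) where
  h : Fin k → E → E
  g : Fin k → E → E
  p : Fin k → E → ℝ
  L : Fin k → E → ℝ
  K : Set E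
  M : ℝ
  δ : ℝ
  R₁ : ℝ
  b : ℝ
  closedK : IsClosed K
  neK : K.Nonempty
  conth : ∀ i, Continuous (h i)
  contg : ∀ i, Continuous (g i)
  contp : ∀ i, Continuous (p i)
  contL : ∀ i, Continuous (L i)
  gh : ∀ i x, g i (h i x) = x
  hg : ∀ i x, h i (g i x) = x
  hK : ∀ i, ∀ x ∈ K, h i x ∈ K
  R₁pos : 0 < R₁
  sep : ∀ i j, i ≠ j → ∀ a ∈ K, ∀ b ∈ K, R₁ ≤ dist (h i a) (h j b)
  δpos : 0 < δ
  hpδ : ∀ i x, δ ≤ p i x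
  hp1 : ∀ i x, p i x ≤ 1
  psum : ∀ x, ∑ i, p i x = 1
  Lbd : ∀ i x, |L i x| ≤ M
  bpos : 0 < b
  lyap : ∀ x, ∑ i, p i x * L i x ≤ -b
  stab : ∀ (f : E → ℝ) (F A : ℝ), (∀ x, |f x| ≤ F) → (∀ x y, |f x - f y| ≤ A * dist x y) →
    ∀ x y, Tendsto (fun n => (ifsOp h p)^[n] f x - (ifsOp h p)^[n] f y) atTop (nhds 0)
  loc : ∀ η > (0 : ℝ), ∃ R > (0 : ℝ), ∀ i z w, min (dist z w) (dist (h i z) (h i w)) < R →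
    dist (h i z) (h i w) ≤ Real.exp (L i z + η) * dist z w ∧
    dist z w ≤ Real.exp (-L i z + η) * dist (h i z) (h i w) ∧
    p i w ≤ Real.exp η * p i z ∧ p i z ≤ Real.exp η * p i w
  inv : ν = ∑ i, Measure.map (h i) (ν.withDensity fun x => ENNReal.ofReal (p i x))

namespace Sys

variable {E : Type*} [NormedAddCommGroup E] [MeasurableSpace E] [BorelSpace E]
  {k : ℕ} {ν : Measure E} [IsProbabilityMeasure ν] (S : Sys E k ν)

lemma p_pos (i : Fin k) (x : E) : 0 < S.p i x := S.δpos.trans_le (S.hpδ i x)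

lemma lint {F : E → ℝ≥0∞} (hF : Measurable F) :
    ∫⁻ x, F x ∂ν = ∑ i, ∫⁻ x, ENNReal.ofReal (S.p i x) * F (S.h i x) ∂ν := by
  have := congrArg (fun m : Measure E => ∫⁻ x, F x ∂m) S.inv
  refine this.trans ?_
  rw [ lintegral_finsetSum_measure]
  refine Finset.sum_congr rfl fun i _ => ?_
  rw [lintegral_map hF (S.conth i).measurable]
  exact lintegral_withDensity_eq_lintegral_mul ν (S.contp i).measurable.ennreal_ofReal
      (hF.comp (S.conth i).measurable)

lemma rint {F : E → ℝ} (hF : Measurable F) {B : ℝ} (hB : ∀ x, |F x| ≤ B) :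
    ∫ x, F x ∂ν = ∫ x, ∑ i, S.p i x * F (S.h i x) ∂ν := by
  have hle : ∀ i, Measure.map (S.h i) (ν.withDensity fun x => ENNReal.ofReal (S.p i x)) ≤ ν := by
    intro i
    conv_rhs => rw [S.inv]
    intro s
    rw [Measure.finsetSum_apply]
    exact Finset.single_le_sum (f := fun j => (Measure.map (S.h j)
      (ν.withDensity fun x => ENNReal.ofReal (S.p j x))) s) (fun _ _ => zero_le) (Finset.mem_univ i)
  have hFi : Integrable F ν := Integrable.of_bound hF.aestronglyMeasurable B
    (Eventually.of_forall hB)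
  have := congrArg (fun m : Measure E => ∫ x, F x ∂m) S.inv
  refine this.trans ?_
  rw [ integral_finsetSum_measure (fun i _ => hFi.mono_measure (hle i)), integral_finsetSum]
  · refine Finset.sum_congr rfl fun i _ => ?_
    rw [integral_map (S.conth i).measurable.aemeasurable hF.aestronglyMeasurable,
      integral_withDensity_eq_integral_toReal_smul (S.contp i).measurable.ennreal_ofReal
        (Eventually.of_forall fun x => ENNReal.ofReal_lt_top)]
    refine integral_congr_ae (Eventually.of_forall fun x => ?_)
    simp only [smul_eq_mul]
    rw [ENNReal.toReal_ofReal (S.p_pos i x).le]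
  · intro i _
    refine Integrable.of_bound ((S.contp i).measurable.mul
      (hF.comp (S.conth i).measurable)).aestronglyMeasurable B (Eventually.of_forall fun x => ?_)
    rw [Real.norm_eq_abs, abs_mul, abs_of_pos (S.p_pos i x)]
    have := S.hp1 i x
    have := hB (S.h i x)
    have := S.p_pos i x
    nlinarith [abs_nonneg (F (S.h i x))]

/-- the transfer operator -/
abbrev P (f : E → ℝ) : E → ℝ := ifsOp S.h S.p f

lemma P_bdd {f : E → ℝ} {F : ℝ} (hF : ∀ x, |f x| ≤ F) : ∀ x, |S.P f x| ≤ F := by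
  intro x
  refine (Finset.abs_sum_le_sum_abs _ _).trans ?_
  calc ∑ i, |S.p i x * f (S.h i x)| ≤ ∑ i, S.p i x * F := by
        refine Finset.sum_le_sum fun i _ => ?_
        rw [abs_mul, abs_of_pos (S.p_pos i x)]
        exact mul_le_mul_of_nonneg_left (hF _) (S.p_pos i x).le
    _ = F := by rw [← Finset.sum_mul, S.psum, one_mul]

lemma P_cont {f : E → ℝ} (hf : Continuous f) : Continuous (S.P f) :=
  continuous_finsetSum _ fun i _ => (S.contp i).mul (hf.comp (S.conth i))

lemma Pn_bdd {f : E → ℝ} {F : ℝ} (hF : ∀ x, |f x| ≤ F) (n : ℕ) : ∀ x, |S.P^[n] f x| ≤ F := by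
  induction n with
  | zero => exact hF
  | succ n ih => rw [Function.iterate_succ_apply']; exact S.P_bdd ih

lemma Pn_cont {f : E → ℝ} (hf : Continuous f) (n : ℕ) : Continuous (S.P^[n] f) := by
  induction n with
  | zero => exact hf
  | succ n ih => rw [Function.iterate_succ_apply']; exact S.P_cont ih

lemma Pn_int {f : E → ℝ} (hf : Continuous f) {F : ℝ} (hF : ∀ x, |f x| ≤ F) (n : ℕ) :
    ∫ x, S.P^[n] f x ∂ν = ∫ x, f x ∂ν := by
  induction n with
  | zero => rfl
  | succ n ih =>
    rw [Function.iterate_succ_apply', ← ih,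
      S.rint (F := S.P^[n] f) (S.Pn_cont hf n).measurable (S.Pn_bdd hF n)]
    rfl

lemma Pn_tendsto {f : E → ℝ} {F A : ℝ} (hf : Continuous f) (hF : ∀ x, |f x| ≤ F)
    (hA : ∀ x y, |f x - f y| ≤ A * dist x y) (x : E) :
    Tendsto (fun n => S.P^[n] f x) atTop (nhds (∫ y, f y ∂ν)) := by
  have hi : ∀ n, Integrable (S.P^[n] f) ν := fun n =>
    Integrable.of_bound (S.Pn_cont hf n).measurable.aestronglyMeasurable F
      (Eventually.of_forall (S.Pn_bdd hF n))
  have h1 := tendsto_integral_of_dominated_convergence (μ := ν) (fun _ => 2 * F)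
    (F := fun n y => S.P^[n] f x - S.P^[n] f y) (f := fun _ => 0)
    (fun n => ((measurable_const).sub (S.Pn_cont hf n).measurable).aestronglyMeasurable)
    (integrable_const _) (fun n => Eventually.of_forall fun y => by
      rw [Real.norm_eq_abs]
      refine (abs_sub _ _).trans ?_
      linarith [S.Pn_bdd hF n x, S.Pn_bdd hF n y])
    (Eventually.of_forall fun y => S.stab f F A hF hA x y)
  have h2 : ∀ n, ∫ y, (S.P^[n] f x - S.P^[n] f y) ∂ν = S.P^[n] f x - ∫ y, f y ∂ν := by
    intro n
    rw [integral_sub (integrable_const _) (hi n), S.Pn_int hf hF]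
    simp
  simp only [h2, integral_zero] at h1
  have h3 := h1.add_const (∫ y, f y ∂ν)
  simpa using h3

lemma ae_K : ∀ᵐ x ∂ν, x ∈ S.K := by
  set f : E → ℝ := fun x => min 1 (infDist x S.K) with hf
  have hf0 : ∀ x, 0 ≤ f x := fun x => le_min zero_le_one infDist_nonneg
  have hfc : Continuous f := continuous_const.min (continuous_infDist_pt _)
  have hfb : ∀ x, |f x| ≤ 1 := fun x => by rw [abs_of_nonneg (hf0 x)]; exact min_le_left _ _
  have hlip : ∀ x y, |f x - f y| ≤ 1 * dist x y := by
    intro x y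
    have h1 : |infDist x S.K - infDist y S.K| ≤ dist x y := by
      have := (lipschitz_infDist_pt S.K).dist_le_mul x y
      simpa [Real.dist_eq] using this
    rw [one_mul]
    refine le_trans ?_ h1
    have := abs_min_sub_min_le_max 1 (infDist x S.K) 1 (infDist y S.K)
    simpa using this
  obtain ⟨x, hx⟩ := S.neK
  have hz : ∀ n, ∀ x ∈ S.K, S.P^[n] f x = 0 := by
    intro n
    induction n with
    | zero => intro x hx; simp [hf, infDist_zero_of_mem hx]
    | succ n ih =>
      intro x hx
      rw [Function.iterate_succ_apply']
      exact Finset.sum_eq_zero fun i _ => by rw [ih _ (S.hK i x hx), mul_zero]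
  have ht := S.Pn_tendsto hfc hfb hlip x
  simp only [hz _ x hx] at ht
  have h0 : ∫ y, f y ∂ν = 0 := tendsto_nhds_unique ht tendsto_const_nhds |>.symm ▸ rfl
  have hi : Integrable f ν := Integrable.of_bound hfc.measurable.aestronglyMeasurable 1
    (Eventually.of_forall hfb)
  rw [integral_eq_zero_iff_of_nonneg hf0 hi] at h0
  filter_upwards [h0] with y hy
  have : infDist y S.K = 0 := by
    simp only [hf, Pi.zero_apply] at hy
    rcases min_choice 1 (infDist y S.K) with h1 | h1
    · rw [h1] at hy; norm_num at hy
    · rw [h1] at hy; exact hy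
  exact (S.closedK.mem_iff_infDist_zero S.neK).2 this

/-- piecewise selector -/
def sel {Y : Type*} [AddCommMonoid Y] (F : Fin k → E → Y) (x : E) : Y :=
  ∑ i, (S.g i ⁻¹' S.K).indicator (F i) x

lemma sel_h {Y : Type*} [AddCommMonoid Y] (F : Fin k → E → Y) (i : Fin k) {z : E} (hz : z ∈ S.K) :
    S.sel F (S.h i z) = F i (S.h i z) := by
  unfold sel
  rw [Finset.sum_eq_single i]
  · rw [Set.indicator_of_mem]; change S.g i (S.h i z) ∈ S.K; rwa [S.gh]
  · intro j _ hj
    rw [Set.indicator_of_notMem]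
    intro (hm : S.g j (S.h i z) ∈ S.K)
    have := S.sep j i hj _ hm _ hz
    rw [S.hg, dist_self] at this
    linarith [S.R₁pos]
  · simp

def T : E → E := S.sel S.g
def φ : E → ℝ := S.sel fun i x => -S.L i (S.g i x)
def ψ : E → ℝ := S.sel fun i x => -Real.log (S.p i (S.g i x))

lemma T_h (i : Fin k) {z : E} (hz : z ∈ S.K) : S.T (S.h i z) = z := by
  rw [T, S.sel_h _ i hz, S.gh]
lemma φ_h (i : Fin k) {z : E} (hz : z ∈ S.K) : S.φ (S.h i z) = - S.L i z := by
  rw [φ, S.sel_h _ i hz, S.gh]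
lemma ψ_h (i : Fin k) {z : E} (hz : z ∈ S.K) : S.ψ (S.h i z) = - Real.log (S.p i z) := by
  rw [ψ, S.sel_h _ i hz, S.gh]

lemma meas_piece (i : Fin k) : MeasurableSet (S.g i ⁻¹' S.K) :=
  (S.contg i).measurable S.closedK.measurableSet

lemma T_meas [SecondCountableTopology E] : Measurable S.T := by
  have : S.T = fun x => ∑ i, (S.g i ⁻¹' S.K).indicator (S.g i) x := rfl
  rw [this]
  exact Finset.measurable_fun_sum _ fun i _ => (S.contg i).measurable.indicator (S.meas_piece i)

lemma φ_meas : Measurable S.φ := by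
  have : S.φ = fun x => ∑ i, (S.g i ⁻¹' S.K).indicator (fun x => -S.L i (S.g i x)) x := rfl
  rw [this]
  exact Finset.measurable_fun_sum _ fun i _ =>
    (((S.contL i).comp (S.contg i)).measurable.neg).indicator (S.meas_piece i)

lemma ψ_meas : Measurable S.ψ := by
  have : S.ψ = fun x => ∑ i, (S.g i ⁻¹' S.K).indicator
    (fun x => -Real.log (S.p i (S.g i x))) x := rfl
  rw [this]
  exact Finset.measurable_fun_sum _ fun i _ =>
    ((((S.contp i).comp (S.contg i)).measurable.log).neg).indicator (S.meas_piece i)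

lemma logp_bd (i : Fin k) (x : E) : |-Real.log (S.p i x)| ≤ -Real.log S.δ := by
  have h1 : Real.log (S.p i x) ≤ 0 := Real.log_nonpos (S.p_pos i x).le (S.hp1 i x)
  have h2 : Real.log S.δ ≤ Real.log (S.p i x) := Real.log_le_log S.δpos (S.hpδ i x)
  rw [abs_of_nonneg (by linarith)]
  linarith

lemma sel_bdd {F : Fin k → E → ℝ} {B : ℝ} (hB : ∀ i x, |F i x| ≤ B) (x : E) :
    |S.sel F x| ≤ k * B := by
  refine (Finset.abs_sum_le_sum_abs _ _).trans ?_
  calc ∑ i, |(S.g i ⁻¹' S.K).indicator (F i) x| ≤ ∑ _i : Fin k, B := by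
        refine Finset.sum_le_sum fun i _ => ?_
        by_cases hx : x ∈ S.g i ⁻¹' S.K
        · rw [Set.indicator_of_mem hx]; exact hB i x
        · rw [Set.indicator_of_notMem hx, abs_zero]; exact (abs_nonneg _).trans (hB i x)
    _ = k * B := by simp

lemma φ_bdd (x : E) : |S.φ x| ≤ k * S.M :=
  S.sel_bdd (fun i x => by rw [abs_neg]; exact S.Lbd i _) x
lemma ψ_bdd (x : E) : |S.ψ x| ≤ k * (-Real.log S.δ) := S.sel_bdd (fun i x => S.logp_bd i _) x

lemma φ_int : ∫ x, S.φ x ∂ν = - ∫ x, ∑ i, S.p i x * S.L i x ∂ν := by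
  rw [S.rint S.φ_meas S.φ_bdd, ← integral_neg]
  refine integral_congr_ae ?_
  filter_upwards [S.ae_K] with x hx
  rw [← Finset.sum_neg_distrib]
  exact Finset.sum_congr rfl fun i _ => by rw [S.φ_h i hx, mul_neg]

lemma ψ_int : ∫ x, S.ψ x ∂ν = - ∫ x, ∑ i, S.p i x * Real.log (S.p i x) ∂ν := by
  rw [S.rint S.ψ_meas S.ψ_bdd, ← integral_neg]
  refine integral_congr_ae ?_
  filter_upwards [S.ae_K] with x hx
  rw [← Finset.sum_neg_distrib]
  exact Finset.sum_congr rfl fun i _ => by rw [S.ψ_h i hx, mul_neg]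

lemma φ_int_pos : 0 < ∫ x, S.φ x ∂ν := by
  rw [S.φ_int]
  have hi : Integrable (fun x => ∑ i, S.p i x * S.L i x) ν := by
    refine Integrable.of_bound (continuous_finsetSum _ fun i _ =>
      (S.contp i).mul (S.contL i)).measurable.aestronglyMeasurable (k * S.M)
      (Eventually.of_forall fun x => ?_)
    refine (Finset.abs_sum_le_sum_abs _ _).trans ?_
    calc ∑ i, |S.p i x * S.L i x| ≤ ∑ _i : Fin k, S.M := by
          refine Finset.sum_le_sum fun i _ => ?_
          rw [abs_mul, abs_of_pos (S.p_pos i x)]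
          have := S.hp1 i x
          have := S.Lbd i x
          nlinarith [abs_nonneg (S.L i x)]
      _ = k * S.M := by simp
  have := integral_mono hi (integrable_const (-S.b)) (fun x => S.lyap x)
  simp at this
  linarith [S.bpos]

lemma ψ_int_nonneg : 0 ≤ ∫ x, S.ψ x ∂ν := by
  rw [S.ψ_int, ← integral_neg]
  refine integral_nonneg fun x => ?_
  change 0 ≤ - ∑ i, S.p i x * Real.log (S.p i x)
  rw [neg_nonneg]
  exact Finset.sum_nonpos fun i _ => mul_nonpos_of_nonneg_of_nonpos (S.p_pos i x).le
    (Real.log_nonpos (S.p_pos i x).le (S.hp1 i x))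

lemma sum_ofReal (x : E) : ∑ i, ENNReal.ofReal (S.p i x) = 1 := by
  rw [← ENNReal.ofReal_sum_of_nonneg fun i _ => (S.p_pos i x).le, S.psum, ENNReal.ofReal_one]

lemma T_mp [SecondCountableTopology E] : MeasurePreserving S.T ν ν := by
  refine ⟨S.T_meas, ?_⟩
  ext A hA
  rw [Measure.map_apply S.T_meas hA, ← lintegral_indicator_one (S.T_meas hA),
    S.lint ((measurable_one).indicator (S.T_meas hA)), ← lintegral_finsetSum,
    ← lintegral_indicator_one hA]
  · refine lintegral_congr_ae ?_
    filter_upwards [S.ae_K] with x hx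
    have : ∀ i, (S.T ⁻¹' A).indicator (1 : E → ℝ≥0∞) (S.h i x) = A.indicator 1 x := by
      intro i
      change A.indicator (1 : E → ℝ≥0∞) (S.T (S.h i x)) = A.indicator 1 x
      rw [S.T_h i hx]
    simp only [this]
    rw [← Finset.sum_mul, S.sum_ofReal, one_mul]
  · intro i _
    exact (S.contp i).measurable.ennreal_ofReal.mul
      ((measurable_one.indicator (S.T_meas hA)).comp (S.conth i).measurable)

lemma Pn_int_inv {A : Set E} (hA : MeasurableSet A) (hAT : S.T ⁻¹' A = A) {f : E → ℝ}
    (hf : Continuous f) {F : ℝ} (hF : ∀ x, |f x| ≤ F) (n : ℕ) :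
    ∫ x in A, S.P^[n] f x ∂ν = ∫ x in A, f x ∂ν := by
  induction n with
  | zero => rfl
  | succ n ih =>
    rw [← ih, ← integral_indicator hA, ← integral_indicator hA,
      S.rint (F := A.indicator (S.P^[n] f)) ((S.Pn_cont hf n).measurable.indicator hA) (B := F)]
    · refine integral_congr_ae ?_
      filter_upwards [S.ae_K] with x hx
      have : ∀ i, (S.h i x ∈ A ↔ x ∈ A) := by
        intro i
        conv_lhs => rw [← hAT]
        rw [Set.mem_preimage, S.T_h i hx]
      by_cases hxA : x ∈ A
      · rw [Set.indicator_of_mem hxA, Function.iterate_succ_apply']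
        exact Finset.sum_congr rfl fun i _ => by rw [Set.indicator_of_mem ((this i).2 hxA)]
      · rw [Set.indicator_of_notMem hxA]
        exact (Finset.sum_eq_zero fun i _ => by
          rw [Set.indicator_of_notMem (fun h => hxA ((this i).1 h)), mul_zero]).symm
    · intro x
      by_cases hx : x ∈ A
      · rw [Set.indicator_of_mem hx]; exact S.Pn_bdd hF n x
      · rw [Set.indicator_of_notMem hx, abs_zero]; exact (abs_nonneg _).trans (hF x)

lemma ergodic [SecondCountableTopology E] : Ergodic S.T ν := by
  refine ⟨S.T_mp, ⟨fun A hA hAT => ?_⟩⟩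
  have key : ∀ (f : E → ℝ) (F D : ℝ), Continuous f → (∀ x, |f x| ≤ F) →
      (∀ x y, |f x - f y| ≤ D * dist x y) →
      ∫ x in A, f x ∂ν = ν.real A * ∫ x, f x ∂ν := by
    intro f F D hf hF hD
    have h1 := tendsto_integral_of_dominated_convergence (μ := ν.restrict A) (fun _ => F)
      (F := fun n y => S.P^[n] f y) (f := fun _ => ∫ x, f x ∂ν)
      (fun n => (S.Pn_cont hf n).measurable.aestronglyMeasurable)
      (integrable_const _) (fun n => Eventually.of_forall (S.Pn_bdd hF n))
      (Eventually.of_forall fun y => S.Pn_tendsto hf hF hD y)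
    simp only [S.Pn_int_inv hA hAT hf hF] at h1
    have := tendsto_nhds_unique h1 tendsto_const_nhds
    rw [← this]
    simp
  have hcl : ∀ F : Set E, IsClosed F → ν.real (F ∩ A) = ν.real A * ν.real F := by
    intro F hF
    have hpos : ∀ n : ℕ, (0 : ℝ) < 1 / ((n : ℝ) + 1) := fun n => by positivity
    have t1 := tendsto_integral_thickenedIndicator_of_isClosed (ν.restrict A) hF hpos
      tendsto_one_div_add_atTop_nhds_zero_nat
    have t2 := (tendsto_integral_thickenedIndicator_of_isClosed ν hF hpos
      tendsto_one_div_add_atTop_nhds_zero_nat).const_mul (ν.real A)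
    have e : ∀ n, ∫ x in A, (thickenedIndicator (hpos n) F x : ℝ) ∂ν =
        ν.real A * ∫ x, (thickenedIndicator (hpos n) F x : ℝ) ∂ν := by
      intro n
      have hl := lipschitzWith_thickenedIndicator (hpos n) F
      refine key _ 1 (((1 / ((n : ℝ) + 1)).toNNReal⁻¹ : ℝ≥0)) ?_ ?_ ?_
      · exact NNReal.continuous_coe.comp (thickenedIndicator (hpos n) F).continuous
      · intro x
        rw [abs_of_nonneg (NNReal.coe_nonneg _)]
        exact_mod_cast thickenedIndicator_le_one (hpos n) F x
      · intro x y
        have := hl.dist_le_mul x y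
        rw [NNReal.dist_eq] at this
        exact this
    simp only [e] at t1
    have := tendsto_nhds_unique t1 t2
    rw [measureReal_restrict_apply hF.measurableSet] at this
    exact this
  have hmeas : ν.restrict A = (ν A) • ν := by
    have hfin : IsFiniteMeasure ((ν A) • ν) := by
      refine ⟨?_⟩
      simp [measure_lt_top]
    refine ext_of_generate_finite {s | IsClosed s} ?_ isPiSystem_isClosed ?_ ?_
    · rw [BorelSpace.measurable_eq (α := E), borel_eq_generateFrom_isClosed]
    · intro F hF
      have := hcl F hF
      rw [Measure.restrict_apply (IsClosed.measurableSet hF), Measure.smul_apply, smul_eq_mul]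
      rw [Measure.real, Measure.real, Measure.real, ← ENNReal.toReal_mul] at this
      rwa [ENNReal.toReal_eq_toReal_iff' (measure_ne_top _ _)
        (ENNReal.mul_ne_top (measure_ne_top _ _) (measure_ne_top _ _))] at this
    · simp
  have h2 : ν.restrict A Aᶜ = ν A * ν Aᶜ := by rw [hmeas]; rfl
  rw [Measure.restrict_apply hA.compl] at h2
  simp at h2
  rw [Filter.eventuallyConst_set]
  rcases h2 with h2 | h2
  · right
    rw [ae_iff]; simpa using h2
  · left
    rw [ae_iff]; exact h2

end Sys

end SysPart

section LocalPart

set_option linter.unusedSectionVars false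

namespace Sys

variable {E : Type*} [NormedAddCommGroup E] [MeasurableSpace E] [BorelSpace E]
  {k : ℕ} {ν : Measure E} [IsProbabilityMeasure ν] (S : Sys E k ν)

lemma M_nonneg [Nonempty (Fin k)] (x : E) : 0 ≤ S.M :=
  (abs_nonneg _).trans (S.Lbd (Classical.arbitrary _) x)

/-- `x` lies in one of the pieces -/
def Good (x : E) : Prop := ∃ i, ∃ z ∈ S.K, S.h i z = x

lemma ae_good0 : ∀ᵐ x ∂ν, S.Good x := by
  have hB : MeasurableSet (⋂ i, (S.g i ⁻¹' S.K)ᶜ) :=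
    MeasurableSet.iInter fun i => (S.meas_piece i).compl
  have h0 : ν (⋂ i, (S.g i ⁻¹' S.K)ᶜ) = 0 := by
    rw [← lintegral_indicator_one hB, S.lint (measurable_one.indicator hB)]
    refine Finset.sum_eq_zero fun i _ => ?_
    refine (lintegral_congr_ae (g := fun _ => 0) ?_).trans lintegral_zero
    filter_upwards [S.ae_K] with x hx
    rw [Set.indicator_of_notMem]
    · simp
    · intro hm
      have := Set.mem_iInter.1 hm i
      apply this
      change S.g i (S.h i x) ∈ S.K
      rwa [S.gh]
  refine measure_mono_null ?_ h0
  intro x (hx : ¬ S.Good x)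
  refine Set.mem_iInter.2 fun i hi => hx ⟨i, S.g i x, hi, S.hg i x⟩

lemma ae_good [SecondCountableTopology E] : ∀ᵐ x ∂ν, ∀ n, S.Good (S.T^[n] x) := by
  rw [ae_all_iff]
  intro n
  exact (S.T_mp.iterate n).quasiMeasurePreserving.ae S.ae_good0

lemma local_est {η : ℝ} (hη : 0 < η) : ∃ R > (0 : ℝ), ∀ x, S.Good x → ∀ r ≤ R,
    ν (ball x r) ≤ ENNReal.ofReal (Real.exp (-S.ψ x + η)) *
      ν (ball (S.T x) (r * Real.exp (S.φ x + η))) ∧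
    ENNReal.ofReal (Real.exp (-S.ψ x - η)) * ν (ball (S.T x) (r * Real.exp (S.φ x - η))) ≤
      ν (ball x r) := by
  obtain ⟨R, hR, hloc⟩ := S.loc η hη
  refine ⟨min (min R (R * Real.exp (-S.M))) S.R₁,
    lt_min (lt_min hR (by positivity)) S.R₁pos, ?_⟩
  rintro _ ⟨i, z, hz, rfl⟩ r hr
  have hr1 : r ≤ R := hr.trans ((min_le_left _ _).trans (min_le_left _ _))
  have hr2 : r ≤ R * Real.exp (-S.M) := hr.trans ((min_le_left _ _).trans (min_le_right _ _))
  have hr3 : r ≤ S.R₁ := hr.trans (min_le_right _ _)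
  rw [S.T_h i hz, S.φ_h i hz, S.ψ_h i hz]
  have hexp : Real.exp (Real.log (S.p i z)) = S.p i z := Real.exp_log (S.p_pos i z)
  have hmb : MeasurableSet (ball (S.h i z) r) := measurableSet_ball
  have hν : ν (ball (S.h i z) r) = ∑ j, ∫⁻ w, ENNReal.ofReal (S.p j w) *
      (ball (S.h i z) r).indicator 1 (S.h j w) ∂ν := by
    rw [← lintegral_indicator_one hmb, S.lint (measurable_one.indicator hmb)]
  rw [hν]
  constructor
  · rw [Finset.sum_eq_single i]
    · rw [← lintegral_indicator_one measurableSet_ball, ← lintegral_const_mul _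
        (measurable_one.indicator measurableSet_ball)]
      refine lintegral_mono fun w => ?_
      by_cases hw : S.h i w ∈ ball (S.h i z) r
      · rw [Set.indicator_of_mem hw]
        have hd : dist (S.h i z) (S.h i w) < r := by rw [dist_comm]; exact hw
        obtain ⟨_, h2, h3, _⟩ := hloc i z w ((min_le_right _ _).trans_lt (hd.trans_le hr1))
        have hwz : w ∈ ball z (r * Real.exp (-S.L i z + η)) := by
          rw [mem_ball, dist_comm]
          refine h2.trans_lt ?_
          rw [mul_comm]
          exact mul_lt_mul_of_pos_right hd (Real.exp_pos _)
        rw [Set.indicator_of_mem hwz]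
        simp only [Pi.one_apply, mul_one]
        refine ENNReal.ofReal_le_ofReal ?_
        rw [neg_neg, Real.exp_add, hexp, mul_comm]
        exact h3
      · rw [Set.indicator_of_notMem hw]; simp
    · intro j _ hj
      refine (lintegral_congr_ae (g := fun _ => 0) ?_).trans lintegral_zero
      filter_upwards [S.ae_K] with w hw
      rw [Set.indicator_of_notMem]
      · simp
      · intro hm
        have h1 := S.sep j i hj w hw z hz
        have h2 : dist (S.h j w) (S.h i z) < r := hm
        linarith
    · simp
  · refine le_trans ?_ (Finset.single_le_sum (fun _ _ => zero_le) (Finset.mem_univ i))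
    rw [← lintegral_indicator_one measurableSet_ball, ← lintegral_const_mul _
        (measurable_one.indicator measurableSet_ball)]
    refine lintegral_mono fun w => ?_
    by_cases hw : w ∈ ball z (r * Real.exp (-S.L i z - η))
    · rw [Set.indicator_of_mem hw]
      have hd : dist z w < r * Real.exp (-S.L i z - η) := by rw [dist_comm]; exact hw
      have hr0 : 0 < r := by
        by_contra hc
        push Not at hc
        have := mul_nonpos_of_nonpos_of_nonneg hc (Real.exp_pos (-S.L i z - η)).le
        linarith [dist_nonneg (x := z) (y := w)]
      have hdR : dist z w < R := by
        refine hd.trans_le ?_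
        calc r * Real.exp (-S.L i z - η) ≤ R * Real.exp (-S.M) * Real.exp (S.M) := by
              refine mul_le_mul hr2 (Real.exp_le_exp.2 ?_) (Real.exp_pos _).le (by positivity)
              have := (abs_le.1 (S.Lbd i z)).1
              linarith
          _ = R := by rw [mul_assoc, ← Real.exp_add]; simp
      obtain ⟨h1, _, _, h4⟩ := hloc i z w ((min_le_left _ _).trans_lt hdR)
      have hm : S.h i w ∈ ball (S.h i z) r := by
        rw [mem_ball, dist_comm]
        refine h1.trans_lt ?_
        calc _ < Real.exp (S.L i z + η) * (r * Real.exp (-S.L i z - η)) :=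
              mul_lt_mul_of_pos_left hd (Real.exp_pos _)
          _ = r * Real.exp ((S.L i z + η) + (-S.L i z - η)) := by
              rw [Real.exp_add (S.L i z + η)]; ring
          _ = r := by ring_nf; simp
      rw [Set.indicator_of_mem hm]
      simp only [Pi.one_apply, mul_one]
      refine ENNReal.ofReal_le_ofReal ?_
      rw [neg_neg, Real.exp_sub, hexp, div_le_iff₀ (Real.exp_pos _), mul_comm]
      exact h4
    · rw [Set.indicator_of_notMem hw]; simp

lemma local_iter {η : ℝ} (hη : 0 < η) : ∃ R > (0 : ℝ), ∀ x, (∀ n, S.Good (S.T^[n] x)) → ∀ r, ∀ n : ℕ,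
    ((∀ j < n, r * Real.exp (birkhoffSum S.T S.φ j x + j * η) ≤ R) →
    ν (ball x r) ≤ ENNReal.ofReal (Real.exp (-birkhoffSum S.T S.ψ n x + n * η)) *
      ν (ball (S.T^[n] x) (r * Real.exp (birkhoffSum S.T S.φ n x + n * η)))) ∧
    ((∀ j < n, r * Real.exp (birkhoffSum S.T S.φ j x - j * η) ≤ R) →
    ENNReal.ofReal (Real.exp (-birkhoffSum S.T S.ψ n x - n * η)) *
      ν (ball (S.T^[n] x) (r * Real.exp (birkhoffSum S.T S.φ n x - n * η))) ≤ ν (ball x r)) := by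
  obtain ⟨R, hR, hloc⟩ := S.local_est hη
  refine ⟨R, hR, fun x hx r n => ⟨?_, ?_⟩⟩
  · induction n with
    | zero => intro _; simp
    | succ n ih =>
      intro hj
      refine (ih fun j hjn => hj j (hjn.trans (Nat.lt_succ_self n))).trans ?_
      have h1 := (hloc _ (hx n) _ (hj n (Nat.lt_succ_self n))).1
      refine (mul_le_mul_right h1 _).trans (le_of_eq ?_)
      rw [← mul_assoc, ← ENNReal.ofReal_mul (Real.exp_pos _).le, ← Real.exp_add,
        Function.iterate_succ_apply', mul_assoc, ← Real.exp_add, birkhoffSum_succ, birkhoffSum_succ]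
      push_cast
      have e1 : -birkhoffSum S.T S.ψ n x + n * η + (-S.ψ (S.T^[n] x) + η) =
        -(birkhoffSum S.T S.ψ n x + S.ψ (S.T^[n] x)) + (n + 1) * η := by ring
      have e2 : birkhoffSum S.T S.φ n x + n * η + (S.φ (S.T^[n] x) + η) =
        birkhoffSum S.T S.φ n x + S.φ (S.T^[n] x) + (n + 1) * η := by ring
      rw [e1, e2]
  · induction n with
    | zero => intro _; simp
    | succ n ih =>
      intro hj
      refine le_trans ?_ (ih fun j hjn => hj j (hjn.trans (Nat.lt_succ_self n)))
      have h1 := (hloc _ (hx n) _ (hj n (Nat.lt_succ_self n))).2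
      refine le_trans (le_of_eq ?_) (mul_le_mul_right h1 _)
      rw [← mul_assoc, ← ENNReal.ofReal_mul (Real.exp_pos _).le, ← Real.exp_add,
        Function.iterate_succ_apply', mul_assoc, ← Real.exp_add, birkhoffSum_succ, birkhoffSum_succ]
      push_cast
      have e1 : -birkhoffSum S.T S.ψ n x - n * η + (-S.ψ (S.T^[n] x) - η) =
        -(birkhoffSum S.T S.ψ n x + S.ψ (S.T^[n] x)) - (n + 1) * η := by ring
      have e2 : birkhoffSum S.T S.φ n x - n * η + (S.φ (S.T^[n] x) - η) =
        birkhoffSum S.T S.φ n x + S.φ (S.T^[n] x) - (n + 1) * η := by ring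
      rw [e1, e2]

end Sys

end LocalPart

section LowerPart

set_option linter.unusedSectionVars false

namespace Sys

variable {E : Type*} [NormedAddCommGroup E] [MeasurableSpace E] [BorelSpace E]
  {k : ℕ} {ν : Measure E} [IsProbabilityMeasure ν] (S : Sys E k ν)

lemma ae_upper [SecondCountableTopology E] {t : ℝ} (ht : 0 < t)
    (hts : t * ∫ x, S.φ x ∂ν < ∫ x, S.ψ x ∂ν) :
    ∀ᵐ x ∂ν, ∃ C r₀ : ℝ, 0 < r₀ ∧ ∀ r, 0 < r → r < r₀ →
      ν (ball x r) ≤ ENNReal.ofReal (C * r ^ t) := by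
  set Λ := ∫ x, S.φ x ∂ν with hΛ
  set H := ∫ x, S.ψ x ∂ν with hH
  have hΛ0 : 0 < Λ := S.φ_int_pos
  set η := (H - t * Λ) / (2 * t + 2) with hηd
  have hη : 0 < η := div_pos (by linarith) (by linarith)
  have hηe : η * (2 * t + 2) = H - t * Λ := by rw [hηd]; field_simp
  obtain ⟨R, hR, hloc⟩ := S.local_iter hη
  filter_upwards [birkhoff_two S.ergodic S.φ_meas S.φ_bdd hη,
    birkhoff_two S.ergodic S.ψ_meas S.ψ_bdd hη, S.ae_good] with x ⟨C₁, hC₁0, hC₁⟩ ⟨C₂, hC₂0, hC₂⟩ hx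
  set a := Λ + 2 * η with ha
  have ha0 : 0 < a := by positivity
  have hta : t * a = H - 2 * η := by rw [ha]; linarith
  set Q := R * Real.exp (-C₁) with hQ
  have hQ0 : 0 < Q := by positivity
  refine ⟨Real.exp C₂ * Q ^ (-t), Q, hQ0, fun r hr hrQ => ?_⟩
  set l := Real.log (Q / r) / a with hl
  have hl0 : 0 ≤ l := div_nonneg (Real.log_nonneg (by rw [le_div_iff₀ hr]; linarith)) ha0.le
  set n := ⌊l⌋₊ + 1 with hn
  have h1 := ((hloc x hx r n).1 ?_).trans (mul_le_of_le_one_right' prob_le_one)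
  · refine h1.trans (ENNReal.ofReal_le_ofReal ?_)
    have hnl : l ≤ n := by rw [hn]; push_cast; exact (Nat.lt_floor_add_one l).le
    have h2 := (abs_le.1 (hC₂ n)).1
    have e1 : r ^ t = Real.exp (t * Real.log r) := by rw [Real.rpow_def_of_pos hr, mul_comm]
    have e2 : Q ^ (-t) = Real.exp (-t * Real.log Q) := by rw [Real.rpow_def_of_pos hQ0, mul_comm]
    rw [e1, e2, ← Real.exp_add, ← Real.exp_add, Real.exp_le_exp]
    have hla : l * a = Real.log Q - Real.log r := by
      rw [hl, div_mul_cancel₀ _ ha0.ne', Real.log_div hQ0.ne' hr.ne']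
    have h3 : (n : ℝ) * (t * a) ≥ l * (t * a) :=
      mul_le_mul_of_nonneg_right hnl (by positivity)
    have h4 : l * (t * a) = t * (Real.log Q - Real.log r) := by rw [← hla]; ring
    rw [h4, hta] at h3
    nlinarith
  · intro j hj
    have hjl : (j : ℝ) ≤ l := by
      have : j ≤ ⌊l⌋₊ := Nat.lt_succ_iff.1 hj
      exact (Nat.cast_le.2 this).trans (Nat.floor_le hl0)
    have h2 := (abs_le.1 (hC₁ j)).2
    have h3 : birkhoffSum S.T S.φ j x + j * η ≤ Real.log (Q / r) + C₁ := by
      have : (j : ℝ) * a ≤ Real.log (Q / r) := by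
        rw [hl, le_div_iff₀ ha0] at hjl; exact hjl
      rw [ha] at this
      nlinarith
    calc r * Real.exp (birkhoffSum S.T S.φ j x + j * η)
        ≤ r * Real.exp (Real.log (Q / r) + C₁) :=
          mul_le_mul_of_nonneg_left (Real.exp_le_exp.2 h3) hr.le
      _ = r * (Q / r) * Real.exp C₁ := by
          rw [Real.exp_add, Real.exp_log (by positivity)]; ring
      _ = R * (Real.exp (-C₁) * Real.exp C₁) := by rw [mul_div_cancel₀ _ hr.ne', hQ]; ring
      _ ≤ R := by rw [← Real.exp_add]; simp

end Sys

lemma frostman_dim {X : Type*} [MetricSpace X] [MeasurableSpace X] [BorelSpace X]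
    {ν : Measure X} {t : ℝ} (ht : 0 < t)
    (hb : ∀ᵐ x ∂ν, ∃ C r₀ : ℝ, 0 < r₀ ∧ ∀ r, 0 < r → r < r₀ →
      ν (ball x r) ≤ ENNReal.ofReal (C * r ^ t)) (s₀ : Set X) (hs : 0 < ν s₀) :
    ENNReal.ofReal t ≤ dimH s₀ := by
  set A : ℕ → Set X := fun N => {x | ∀ r : ℝ, 0 < r → r < 1 / ((N : ℝ) + 1) →
    ν (ball x r) ≤ ENNReal.ofReal ((N + 1) * r ^ t)} with hA
  have hcov : ∀ᵐ x ∂ν, x ∈ ⋃ N, A N := by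
    filter_upwards [hb] with x ⟨C, r₀, hr₀, hC⟩
    obtain ⟨N, hN⟩ := exists_nat_gt (max C (1 / r₀))
    refine Set.mem_iUnion.2 ⟨N, fun r hr hrN => ?_⟩
    have h1 : C < N := (le_max_left _ _).trans_lt hN
    have h2 : 1 / r₀ < N := (le_max_right _ _).trans_lt hN
    refine (hC r hr (hrN.trans ?_)).trans (ENNReal.ofReal_le_ofReal ?_)
    · rw [div_lt_iff₀ hr₀] at h2
      rw [div_lt_iff₀ (by positivity)]
      nlinarith
    · have := Real.rpow_nonneg hr.le t
      nlinarith
  obtain ⟨N, hN⟩ : ∃ N, ν (s₀ ∩ A N) ≠ 0 := by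
    by_contra hc
    push Not at hc
    have h0 : ν (⋃ N, s₀ ∩ A N) = 0 := measure_iUnion_null hc
    have : ν s₀ ≤ ν (⋃ N, s₀ ∩ A N) + ν (⋃ N, A N)ᶜ := by
      refine (measure_mono ?_).trans (measure_union_le _ _)
      intro x hx
      by_cases hxA : x ∈ ⋃ N, A N
      · left; rw [← Set.inter_iUnion]; exact ⟨hx, hxA⟩
      · right; exact hxA
    rw [h0, show ν (⋃ N, A N)ᶜ = 0 from hcov] at this
    simp at this
    exact hs.ne' this
  set Q := s₀ ∩ A N with hQ
  set c : ℝ≥0∞ := (ENNReal.ofReal ((N : ℝ) + 1))⁻¹ with hc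
  have hc1 : ENNReal.ofReal ((N : ℝ) + 1) ≠ 0 := by
    rw [Ne, ENNReal.ofReal_eq_zero]; push Not; positivity
  have key : c • ν.restrict Q ≤ Measure.hausdorffMeasure t := by
    refine Measure.le_hausdorffMeasure t _ (ENNReal.ofReal (1 / (2 * ((N : ℝ) + 1))))
      (by rw [ENNReal.ofReal_pos]; positivity) fun u hu => ?_
    have hle : ν.restrict Q u ≤ ENNReal.ofReal ((N : ℝ) + 1) * ediam u ^ t := by
      refine (measure_mono subset_closure).trans ?_
      rw [Measure.restrict_apply isClosed_closure.measurableSet]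
      rcases (closure u ∩ Q).eq_empty_or_nonempty with he | ⟨y, hy⟩
      · rw [he]; simp
      rw [← ediam_closure u] at hu ⊢
      have hfin : ediam (closure u) ≠ ∞ := (hu.trans_lt ENNReal.ofReal_lt_top).ne
      set D := (ediam (closure u)).toReal with hD
      have hDe : ediam (closure u) = ENNReal.ofReal D := (ENNReal.ofReal_toReal hfin).symm
      have hD0 : 0 ≤ D := ENNReal.toReal_nonneg
      have hDlt : D < 1 / ((N : ℝ) + 1) := by
        have : D ≤ 1 / (2 * ((N : ℝ) + 1)) := by
          rw [hDe] at hu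
          exact (ENNReal.ofReal_le_ofReal_iff (by positivity)).1 hu
        refine this.trans_lt ?_
        rw [div_lt_div_iff₀ (by positivity) (by positivity)]
        have : (0:ℝ) ≤ N := Nat.cast_nonneg N
        nlinarith
      have hr : ∀ r, D < r → r < 1 / ((N : ℝ) + 1) →
          ν (closure u ∩ Q) ≤ ENNReal.ofReal ((N + 1) * r ^ t) := by
        intro r hr1 hr2
        refine (measure_mono ?_).trans (hy.2.2 r (hD0.trans_lt hr1) hr2)
        intro w hw
        rw [mem_ball]
        refine lt_of_le_of_lt ?_ hr1
        rw [hD, dist_edist]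
        exact ENNReal.toReal_mono hfin (edist_le_ediam_of_mem hw.1 hy.1)
      have hlim : Tendsto (fun r : ℝ => ENNReal.ofReal (((N : ℝ) + 1) * r ^ t)) (nhdsWithin D (Set.Ioi D))
          (nhds (ENNReal.ofReal (((N : ℝ) + 1) * D ^ t))) := by
        refine Tendsto.mono_left ?_ nhdsWithin_le_nhds
        refine (ENNReal.continuous_ofReal.tendsto _).comp ?_
        exact ((Real.continuousAt_rpow_const D t (Or.inr ht.le)).tendsto).const_mul _
      have := ge_of_tendsto hlim (b := ν (closure u ∩ Q)) (by
        filter_upwards [Ioo_mem_nhdsGT hDlt] with r hr'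
        exact hr r hr'.1 hr'.2)
      refine this.trans (le_of_eq ?_)
      rw [hDe, ENNReal.ofReal_mul (by positivity), ENNReal.ofReal_rpow_of_nonneg hD0 ht.le]
    rw [Measure.smul_apply, smul_eq_mul]
    calc c * ν.restrict Q u ≤ c * (ENNReal.ofReal ((N : ℝ) + 1) * ediam u ^ t) := by gcongr
      _ = ediam u ^ t := by
        rw [← mul_assoc, hc, ENNReal.inv_mul_cancel hc1 ENNReal.ofReal_ne_top, one_mul]
  have hpos : (Measure.hausdorffMeasure t : Measure X) Q ≠ 0 := by
    have := key Q
    intro h0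
    rw [h0, Measure.smul_apply, smul_eq_mul, Measure.restrict_apply_self] at this
    simp [hc] at this
    exact hN this
  have h3 : ((t.toNNReal : ℝ≥0) : ℝ≥0∞) ≤ dimH Q := by
    refine le_dimH_of_hausdorffMeasure_ne_zero ?_
    rwa [Real.coe_toNNReal t ht.le]
  exact h3.trans (dimH_mono Set.inter_subset_left)

end LowerPart

section UpperPart

set_option linter.unusedSectionVars false

lemma billingsley_dim {X : Type*} [MetricSpace X] [SecondCountableTopology X]
    [MeasurableSpace X] [BorelSpace X]
    {ν : Measure X} [IsProbabilityMeasure ν] {t : ℝ} (ht : 0 < t) :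
    dimH {x | ∀ ε > (0 : ℝ), ∃ r, 0 < r ∧ r < ε ∧ ENNReal.ofReal (r ^ t) ≤ ν (ball x r)}
      ≤ ENNReal.ofReal t := by
  set A := {x | ∀ ε > (0 : ℝ), ∃ r, 0 < r ∧ r < ε ∧ ENNReal.ofReal (r ^ t) ≤ ν (ball x r)} with hA
  have h1 : ∀ m : ℕ, ∀ x : X, ∃ r : ℝ, x ∈ A → (0 < r ∧ r < 1 / ((m : ℝ) + 1) ∧
      ENNReal.ofReal (r ^ t) ≤ ν (ball x r)) := by
    intro m x
    by_cases hx : x ∈ A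
    · obtain ⟨r, hr⟩ := hx (1 / ((m : ℝ) + 1)) (by positivity)
      exact ⟨r, fun _ => hr⟩
    · exact ⟨0, fun h => absurd h hx⟩
  choose r hr using h1
  have h2 : ∀ m : ℕ, ∃ u ⊆ A, (u.PairwiseDisjoint fun a => closedBall a (r m a)) ∧
      ∀ a ∈ A, ∃ b ∈ u, closedBall a (r m a) ⊆ closedBall b (5 * r m b) := fun m =>
    Vitali.exists_disjoint_subfamily_covering_enlargement_closedBall A (fun x => x) (r m)
      (1 / ((m : ℝ) + 1)) (fun a ha => (hr m a ha).2.1.le) 5 (by norm_num)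
  choose u huA hud hucov using h2
  have hcount : ∀ m, (u m).Countable := fun m =>
    (hud m).countable_of_nonempty_interior fun a ha =>
      ⟨a, ball_subset_interior_closedBall (mem_ball_self (hr m a (huA m ha)).1)⟩
  have hcnt : ∀ m, Countable (u m) := fun m => (hcount m).to_subtype
  have hlim : Tendsto (fun m : ℕ => ENNReal.ofReal (10 * (1 / ((m : ℝ) + 1)))) atTop (nhds 0) := by
    have := (ENNReal.continuous_ofReal.tendsto _).comp
      ((tendsto_one_div_add_atTop_nhds_zero_nat (𝕜 := ℝ)).const_mul 10)
    rw [mul_zero, ENNReal.ofReal_zero] at this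
    exact this
  have hdiam : ∀ m (b : X), b ∈ A → ediam (closedBall b (5 * r m b)) ≤ ENNReal.ofReal (10 * r m b) := by
    intro m b hb
    refine ediam_le fun x hx y hy => ?_
    rw [edist_dist]
    refine ENNReal.ofReal_le_ofReal ?_
    have := dist_triangle_right x y b
    rw [mem_closedBall] at hx hy
    linarith
  have hH := Measure.hausdorffMeasure_le_liminf_tsum t A (l := atTop)
    (fun m : ℕ => ENNReal.ofReal (10 * (1 / ((m : ℝ) + 1)))) hlim
    (fun m (b : u m) => closedBall (b : X) (5 * r m b))
    (Eventually.of_forall fun m b => (hdiam m b (huA m b.2)).trans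
      (ENNReal.ofReal_le_ofReal (by linarith [(hr m b (huA m b.2)).2.1])))
    (Eventually.of_forall fun m x hx => by
      obtain ⟨b, hb, hs⟩ := hucov m x hx
      exact Set.mem_iUnion.2 ⟨⟨b, hb⟩, hs (mem_closedBall_self (hr m x hx).1.le)⟩)
  have hbound : ∀ m, ∑' b : u m, ediam (closedBall (b : X) (5 * r m b)) ^ t ≤
      ENNReal.ofReal ((10 : ℝ) ^ t) := by
    intro m
    calc ∑' b : u m, ediam (closedBall (b : X) (5 * r m b)) ^ t
        ≤ ∑' b : u m, ENNReal.ofReal ((10 : ℝ) ^ t) * ν (closedBall (b : X) (r m b)) := by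
          refine ENNReal.tsum_le_tsum fun b => ?_
          have hb := hr m b (huA m b.2)
          calc ediam (closedBall (b : X) (5 * r m b)) ^ t
              ≤ ENNReal.ofReal (10 * r m b) ^ t :=
                ENNReal.rpow_le_rpow (hdiam m b (huA m b.2)) ht.le
            _ = ENNReal.ofReal ((10 : ℝ) ^ t) * ENNReal.ofReal ((r m b) ^ t) := by
                rw [ENNReal.ofReal_rpow_of_nonneg (by linarith) ht.le,
                  Real.mul_rpow (by norm_num) hb.1.le, ENNReal.ofReal_mul (by positivity)]
            _ ≤ _ := by
                gcongr
                exact hb.2.2.trans (measure_mono ball_subset_closedBall)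
      _ = ENNReal.ofReal ((10 : ℝ) ^ t) * ∑' b : u m, ν (closedBall (b : X) (r m b)) :=
          ENNReal.tsum_mul_left
      _ ≤ ENNReal.ofReal ((10 : ℝ) ^ t) * 1 := by
          gcongr
          rw [← measure_biUnion (hcount m) (hud m) (fun b _ => measurableSet_closedBall)]
          exact prob_le_one
      _ = _ := mul_one _
  have hfin : (Measure.hausdorffMeasure t : Measure X) A ≠ ∞ := by
    refine ne_top_of_le_ne_top (ENNReal.ofReal_ne_top (r := (10:ℝ) ^ t)) (hH.trans ?_)
    refine (liminf_le_liminf (Eventually.of_forall hbound)).trans ?_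
    rw [liminf_const]
  have : dimH A ≤ ((t.toNNReal : ℝ≥0) : ℝ≥0∞) := by
    refine dimH_le_of_hausdorffMeasure_ne_top ?_
    rwa [Real.coe_toNNReal t ht.le]
  exact this

lemma ae_ball_lower {E : Type*} [NormedAddCommGroup E] [NormedSpace ℝ E] [FiniteDimensional ℝ E]
    [MeasurableSpace E] [BorelSpace E] {ν : Measure E} [IsProbabilityMeasure ν] :
    ∀ᵐ y ∂ν, ∃ r₀ > (0 : ℝ), ∀ r, 0 < r → r < r₀ →
      ENNReal.ofReal (r ^ (Module.finrank ℝ E + 1)) ≤ ν (ball y r) := by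
  set vol : Measure E := Measure.addHaar with hvol
  set d := Module.finrank ℝ E with hd
  filter_upwards [Besicovitch.ae_tendsto_rnDeriv vol ν, Measure.rnDeriv_lt_top vol ν] with y hy hlt
  set B := vol.rnDeriv ν y + 1 with hB
  have hBt : B ≠ ∞ := by simp [hB, hlt.ne]
  have hB0 : B ≠ 0 := by simp [hB]
  have hev : ∀ᶠ r in nhdsWithin (0 : ℝ) (Set.Ioi 0),
      vol (closedBall y r) / ν (closedBall y r) < B :=
    hy.eventually_lt_const (ENNReal.lt_add_right hlt.ne one_ne_zero)
  rw [eventually_nhdsWithin_iff, Metric.eventually_nhds_iff] at hev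
  obtain ⟨ε, hε, hev⟩ := hev
  set v := (vol (ball (0 : E) 1)).toReal with hv
  have hv0 : 0 < v := ENNReal.toReal_pos (measure_ball_pos vol 0 one_pos).ne' measure_ball_lt_top.ne
  have hBr : 0 < B.toReal := ENNReal.toReal_pos hB0 hBt
  refine ⟨min ε (v / (B.toReal * 2 ^ d)), lt_min hε (by positivity), fun r hr hr2 => ?_⟩
  have hrε : r < ε := hr2.trans_le (min_le_left _ _)
  have hrv : r < v / (B.toReal * 2 ^ d) := hr2.trans_le (min_le_right _ _)
  have h1 := hev (y := r / 2) (by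
    rw [Real.dist_eq, sub_zero, abs_of_pos (by positivity)]; linarith)
    (show (0:ℝ) < r / 2 by positivity)
  have h2 : vol (closedBall y (r / 2)) ≤ B * ν (closedBall y (r / 2)) := by
    rw [← ENNReal.div_le_iff_le_mul (Or.inr hBt) (Or.inr hB0)]
    exact h1.le
  rw [Measure.addHaar_closedBall vol y (by positivity)] at h2
  have h3 : ENNReal.ofReal ((r / 2) ^ d) * vol (ball 0 1) ≤ B * ν (ball y r) :=
    h2.trans (by gcongr; exact closedBall_subset_ball (by linarith))
  have h4 := ENNReal.toReal_mono (ENNReal.mul_ne_top hBt (measure_ne_top _ _)) h3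
  rw [ENNReal.toReal_mul, ENNReal.toReal_mul, ENNReal.toReal_ofReal (by positivity), ← hv] at h4
  rw [ENNReal.ofReal_le_iff_le_toReal (measure_ne_top _ _)]
  have h5 : B.toReal * r ^ (d + 1) ≤ (r / 2) ^ d * v := by
    rw [lt_div_iff₀ (by positivity)] at hrv
    rw [div_pow, pow_succ, div_mul_eq_mul_div, le_div_iff₀ (by positivity)]
    have : 0 < r ^ d := by positivity
    nlinarith
  exact le_of_mul_le_mul_left (h5.trans h4) hBr

namespace Sys

variable {E : Type*} [NormedAddCommGroup E] [NormedSpace ℝ E] [FiniteDimensional ℝ E]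
  [MeasurableSpace E] [BorelSpace E]
  {k : ℕ} {ν : Measure E} [IsProbabilityMeasure ν] (S : Sys E k ν)

lemma meas_ball (r : ℝ) : Measurable fun y : E => ν (ball y r) := by
  have : ProperSpace E := FiniteDimensional.proper_real E
  have hs : MeasurableSet {q : E × E | dist q.2 q.1 < r} :=
    (isOpen_lt (continuous_snd.dist continuous_fst) continuous_const).measurableSet
  exact measurable_measure_prodMk_left hs

lemma ae_frequently {η : ℝ} (hη : 0 < η) : ∀ᵐ x ∂ν, ∃ᶠ n : ℕ in atTop,
    ENNReal.ofReal (Real.exp (-(n * η)) ^ (Module.finrank ℝ E + 1)) ≤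
      ν (ball (S.T^[n] x) (Real.exp (-(n * η)))) := by
  have : ProperSpace E := FiniteDimensional.proper_real E
  set d := Module.finrank ℝ E with hd
  set F : ℕ → Set E := fun N => {y | ∀ n : ℕ, N ≤ n →
    ENNReal.ofReal (Real.exp (-(n * η)) ^ (d + 1)) ≤ ν (ball y (Real.exp (-(n * η))))} with hF
  have hFm : ∀ N, MeasurableSet (F N) := by
    intro N
    have : F N = ⋂ (n : ℕ) (_ : N ≤ n), {y | ENNReal.ofReal (Real.exp (-(n * η)) ^ (d + 1)) ≤
      ν (ball y (Real.exp (-(n * η))))} := by ext y; simp [hF]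
    rw [this]
    exact MeasurableSet.iInter fun n => MeasurableSet.iInter fun _ =>
      measurableSet_le measurable_const (meas_ball _)
  have hcov : ∀ᵐ y ∂ν, ∃ N, y ∈ F N := by
    filter_upwards [ae_ball_lower (ν := ν)] with y ⟨r₀, hr₀, hy⟩
    have hl : Tendsto (fun n : ℕ => Real.exp (-(n * η))) atTop (nhds 0) :=
      Real.tendsto_exp_neg_atTop_nhds_zero.comp
        (tendsto_natCast_atTop_atTop.atTop_mul_const hη)
    obtain ⟨N, hN⟩ := eventually_atTop.1 (hl.eventually_lt_const hr₀)
    exact ⟨N, fun n hn => hy _ (Real.exp_pos _) (hN n hn)⟩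
  have hrec : ∀ N, ∀ᵐ x ∂ν, x ∈ F N → ∃ᶠ n in atTop, S.T^[n] x ∈ F N := fun N =>
    S.T_mp.conservative.ae_mem_imp_frequently_image_mem (hFm N).nullMeasurableSet
  filter_upwards [hcov, ae_all_iff.2 hrec] with x ⟨N, hN⟩ hx
  refine ((hx N hN).and_eventually (eventually_ge_atTop N)).mono fun n hn => ?_
  exact hn.1 n hn.2

lemma ae_lower {t : ℝ} (ht : 0 < t) (hts : ∫ x, S.ψ x ∂ν < t * ∫ x, S.φ x ∂ν) :
    ∀ᵐ x ∂ν, ∀ ε > (0 : ℝ), ∃ r, 0 < r ∧ r < ε ∧ ENNReal.ofReal (r ^ t) ≤ ν (ball x r) := by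
  have : ProperSpace E := FiniteDimensional.proper_real E
  set Λ := ∫ x, S.φ x ∂ν with hΛ
  set H := ∫ x, S.ψ x ∂ν with hH
  have hΛ0 : 0 < Λ := S.φ_int_pos
  set D : ℕ := Module.finrank ℝ E + 1 with hD
  set η := (t * Λ - H) / (2 * (2 + 3 * D)) with hηd
  have hη : 0 < η := div_pos (by linarith) (by positivity)
  set γ := t * Λ - H - (2 + 3 * D) * η with hγd
  have hγ : 0 < γ := by
    have : η * (2 * (2 + 3 * D)) = t * Λ - H := by rw [hηd]; field_simp
    rw [hγd]; nlinarith
  obtain ⟨R, hR, hloc⟩ := S.local_iter hη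
  filter_upwards [birkhoff_two S.ergodic S.φ_meas S.φ_bdd hη,
    birkhoff_two S.ergodic S.ψ_meas S.ψ_bdd hη, S.ae_good,
    S.ae_frequently (η := 3 * η) (by positivity)] with x ⟨C₁, hC₁0, hC₁⟩ ⟨C₂, hC₂0, hC₂⟩ hx hfr
  intro ε hε
  have hl : Tendsto (fun n : ℕ => R * Real.exp (-C₁) * Real.exp (-(n * Λ))) atTop (nhds 0) := by
    have := (Real.tendsto_exp_neg_atTop_nhds_zero.comp
        (tendsto_natCast_atTop_atTop.atTop_mul_const hΛ0)).const_mul (R * Real.exp (-C₁))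
    simpa using this
  have hn1 : ∀ᶠ n : ℕ in atTop, 2 * C₁ - Real.log R ≤ n * η :=
    (tendsto_natCast_atTop_atTop.atTop_mul_const hη).eventually_ge_atTop _
  have hn2 : ∀ᶠ n : ℕ in atTop, t * Real.log R - t * C₁ + C₂ ≤ n * γ :=
    (tendsto_natCast_atTop_atTop.atTop_mul_const hγ).eventually_ge_atTop _
  obtain ⟨n, hnf, hnε, hn1, hn2⟩ :=
    (hfr.and_eventually ((hl.eventually_lt_const hε).and (hn1.and hn2))).exists
  set r := R * Real.exp (-C₁) * Real.exp (-(n * Λ)) with hr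
  have hr0 : 0 < r := by positivity
  have hlogr : Real.log r = Real.log R - C₁ - n * Λ := by
    rw [hr, Real.log_mul (by positivity) (Real.exp_pos _).ne', Real.log_mul hR.ne'
      (Real.exp_pos _).ne', Real.log_exp, Real.log_exp]; ring
  have hrexp : r = Real.exp (Real.log R - C₁ - n * Λ) := by rw [← hlogr, Real.exp_log hr0]
  refine ⟨r, hr0, hnε, ?_⟩
  refine le_trans ?_ ((hloc x hx r n).2 ?_)
  · have h1 := abs_le.1 (hC₁ n)
    have h2 := abs_le.1 (hC₂ n)
    have h3 : ν (ball (S.T^[n] x) (Real.exp (-(n * (3 * η))))) ≤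
        ν (ball (S.T^[n] x) (r * Real.exp (birkhoffSum S.T S.φ n x - n * η))) := by
      refine measure_mono (ball_subset_ball ?_)
      rw [hrexp, ← Real.exp_add, Real.exp_le_exp]
      nlinarith
    refine le_trans ?_ (mul_le_mul_right (hnf.trans h3) _)
    rw [← ENNReal.ofReal_mul (Real.exp_pos _).le]
    refine ENNReal.ofReal_le_ofReal ?_
    rw [Real.rpow_def_of_pos hr0, hlogr, ← Real.exp_nat_mul, ← Real.exp_add, Real.exp_le_exp]
    rw [hγd] at hn2
    nlinarith
  · intro j hj
    have h1 := (abs_le.1 (hC₁ j)).2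
    have h2 : (j : ℝ) * Λ ≤ n * Λ :=
      mul_le_mul_of_nonneg_right (Nat.cast_le.2 hj.le) hΛ0.le
    calc r * Real.exp (birkhoffSum S.T S.φ j x - j * η)
        = Real.exp (Real.log R - C₁ - n * Λ + (birkhoffSum S.T S.φ j x - j * η)) := by
          rw [Real.exp_add, ← hrexp]
      _ ≤ Real.exp (Real.log R) := Real.exp_le_exp.2 (by linarith)
      _ = R := Real.exp_log hR

lemma dim_formula :
    lowerDimH ν = upperDimH ν ∧ upperDimH ν = ENNReal.ofReal ((∫ x, S.ψ x ∂ν) / ∫ x, S.φ x ∂ν) := by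
  have : ProperSpace E := FiniteDimensional.proper_real E
  have hΛ0 := S.φ_int_pos
  have hH0 := S.ψ_int_nonneg
  set s := (∫ x, S.ψ x ∂ν) / ∫ x, S.φ x ∂ν with hs
  have hs0 : 0 ≤ s := div_nonneg hH0 hΛ0.le
  have hlow : ENNReal.ofReal s ≤ lowerDimH ν := by
    refine le_iInf₂ fun s₀ hs₀ => ?_
    refine le_of_forall_lt fun c hc => ?_
    obtain ⟨c', rfl⟩ : ∃ c' : ℝ≥0, (c' : ℝ≥0∞) = c := ⟨c.toNNReal, ENNReal.coe_toNNReal hc.ne_top⟩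
    have hc' : (c' : ℝ) < s := by
      rw [← ENNReal.ofReal_coe_nnreal] at hc
      exact (ENNReal.ofReal_lt_ofReal_iff_of_nonneg c'.coe_nonneg).1 hc
    obtain ⟨t, ht1, ht2⟩ := exists_between hc'
    have ht0 : 0 < t := lt_of_le_of_lt c'.coe_nonneg ht1
    have h1 := frostman_dim ht0 (S.ae_upper ht0 (by rwa [hs, lt_div_iff₀ hΛ0] at ht2)) s₀ hs₀
    refine lt_of_lt_of_le ?_ h1
    rw [← ENNReal.ofReal_coe_nnreal]
    exact (ENNReal.ofReal_lt_ofReal_iff ht0).2 ht1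
  have hup : upperDimH ν ≤ ENNReal.ofReal s := by
    have h1 : ∀ t, s < t → upperDimH ν ≤ ENNReal.ofReal t := by
      intro t ht
      have ht0 : 0 < t := lt_of_le_of_lt hs0 ht
      refine le_trans (iInf₂_le _ ?_) (billingsley_dim (ν := ν) ht0)
      exact S.ae_lower ht0 (by rwa [hs, div_lt_iff₀ hΛ0] at ht)
    have hlim : Tendsto (fun t : ℝ => ENNReal.ofReal t) (nhdsWithin s (Set.Ioi s))
        (nhds (ENNReal.ofReal s)) :=
      (ENNReal.continuous_ofReal.tendsto _).mono_left nhdsWithin_le_nhds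
    exact ge_of_tendsto hlim (by filter_upwards [self_mem_nhdsWithin] with t ht using h1 t ht)
  have hlu : lowerDimH ν ≤ upperDimH ν := by
    refine le_iInf₂ fun s₀ hs₀ => iInf₂_le s₀ ?_
    rw [pos_iff_ne_zero]
    intro h0
    have : ν Set.univ ≤ ν s₀ + ν s₀ᶜ := by
      rw [← Set.union_compl_self s₀]; exact measure_union_le _ _
    rw [h0, hs₀, measure_univ] at this
    simp at this
  exact ⟨le_antisymm hlu (hup.trans hlow), le_antisymm hup (hlow.trans hlu)⟩

end Sys

end UpperPart
section Glue

variable {V : Type*} [NormedAddCommGroup V] [NormedSpace ℝ V] [FiniteDimensional ℝ V] [Nontrivial V]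

lemma conf_equiv {f : V →L[ℝ] V} (hf : IsConformalMap f) :
    0 < ‖f‖ ∧ (∀ v, ‖f v‖ = ‖f‖ * ‖v‖) ∧ ∀ e : V ≃L[ℝ] V, (e : V →L[ℝ] V) = f →
      ‖(e.symm : V →L[ℝ] V)‖ ≤ ‖f‖⁻¹ := by
  obtain ⟨c, hc, li, rfl⟩ := hf
  have hn : ‖c • li.toContinuousLinearMap‖ = ‖c‖ := by
    rw [norm_smul, LinearIsometry.norm_toContinuousLinearMap, mul_one]
  have hc' : 0 < ‖c‖ := norm_pos_iff.2 hc
  have hv : ∀ v, ‖(c • li.toContinuousLinearMap) v‖ = ‖c • li.toContinuousLinearMap‖ * ‖v‖ := by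
    intro v
    rw [hn, smul_apply, norm_smul]
    simp
  refine ⟨hn ▸ hc', hv, fun e he => ?_⟩
  refine ContinuousLinearMap.opNorm_le_bound _ (by positivity) fun w => ?_
  have h1 := hv (e.symm w)
  rw [← he] at h1
  simp only [ContinuousLinearEquiv.coe_coe, ContinuousLinearEquiv.apply_symm_apply] at h1
  rw [he, hn] at h1
  rw [hn]
  change ‖e.symm w‖ ≤ _
  rw [h1, ← mul_assoc, inv_mul_cancel₀ hc'.ne', one_mul]

lemma conf_exists {f : V →L[ℝ] V} (hf : IsConformalMap f) :
    ∃ e : V ≃L[ℝ] V, (e : V →L[ℝ] V) = f := by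
  have h1 := conf_equiv hf
  have hinj : Function.Injective (f : V →ₗ[ℝ] V) := by
    rw [injective_iff_map_eq_zero]
    intro v hv
    have h2 := h1.2.1 v
    have h3 : f v = 0 := hv
    rw [h3, norm_zero] at h2
    rcases mul_eq_zero.1 h2.symm with h | h
    · exact absurd h h1.1.ne'
    · exact norm_eq_zero.1 h
  refine ⟨(LinearEquiv.ofInjectiveEndo (f : V →ₗ[ℝ] V) hinj).toContinuousLinearEquiv, ?_⟩
  ext v
  rfl

/-- A conformal C¹ map with bounded log-derivative is a global bi-Lipschitz diffeomorphism. -/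
lemma conf_inverse {h : V → V} (hs : ContDiff ℝ 1 h) {M : ℝ}
    (hM : ∀ x, |Real.log ‖fderiv ℝ h x‖| ≤ M) (hc : ∀ x, IsConformalMap (fderiv ℝ h x)) :
    ∃ g : V → V, Continuous g ∧ (∀ x, g (h x) = x) ∧ (∀ y, h (g y) = y) ∧
      (∀ x, ‖fderiv ℝ h x‖ = Real.exp (Real.log ‖fderiv ℝ h x‖)) ∧
      ∀ y, ∃ e : V →L[ℝ] V, HasFDerivAt g e y ∧ ‖e‖ ≤ Real.exp (-Real.log ‖fderiv ℝ h (g y)‖) := by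
  have hexp : ∀ x, ‖fderiv ℝ h x‖ = Real.exp (Real.log ‖fderiv ℝ h x‖) := fun x =>
    (Real.exp_log (conf_equiv (hc x)).1).symm
  have hi : ∀ x, ‖fderiv ℝ h x‖⁻¹ = Real.exp (-Real.log ‖fderiv ℝ h x‖) := fun x => by
    rw [Real.exp_neg, ← hexp]
  obtain ⟨g, h1, h2, h3, h4⟩ := had_inverse hs (C := Real.exp M) (fun x => by
    obtain ⟨e, he⟩ := conf_exists (hc x)
    refine ⟨e, he, ((conf_equiv (hc x)).2.2 e he).trans ?_⟩
    rw [hi]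
    exact Real.exp_le_exp.2 ((neg_le_abs _).trans (hM x)))
  refine ⟨g, h1, h2, h3, hexp, fun y => ?_⟩
  obtain ⟨e, he, hd⟩ := h4 y
  exact ⟨_, hd, ((conf_equiv (hc _)).2.2 e he).trans (hi _).le⟩

lemma mv_ball {f : V → V} {f' : V → V →L[ℝ] V} (hf : ∀ x, HasFDerivAt f (f' x) x) {z w : V} {C r : ℝ}
    (hr : dist z w < r) (hC : ∀ x, dist z x < r → ‖f' x‖ ≤ C) :
    dist (f z) (f w) ≤ C * dist z w := by
  have := (convex_ball z r).norm_image_sub_le_of_norm_hasFDerivWithin_le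
    (fun x _ => (hf x).hasFDerivWithinAt) (fun x hx => hC x (by rwa [mem_ball'] at hx))
    (mem_ball_self (dist_nonneg.trans_lt hr)) (mem_ball'.2 hr)
  rwa [dist_eq_norm', dist_eq_norm']

lemma mv_global {f : V → V} {f' : V → V →L[ℝ] V} (hf : ∀ x, HasFDerivAt f (f' x) x) {C : ℝ}
    (hC : ∀ x, ‖f' x‖ ≤ C) (z w : V) :
    dist (f z) (f w) ≤ C * dist z w :=
  mv_ball hf (lt_add_one _) fun x _ => hC x

lemma unif_p {p : V → ℝ} (hp : UniformContinuous p) {δ η : ℝ} (hδ : 0 < δ) (hη : 0 < η)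
    (hpδ : ∀ x, δ ≤ p x) : ∃ r > 0, ∀ z w, dist z w < r →
      p w ≤ Real.exp η * p z ∧ p z ≤ Real.exp η * p w := by
  obtain ⟨r, hr, h⟩ := Metric.uniformContinuous_iff.1 hp (δ * η) (by positivity)
  have key : ∀ z w, dist z w < r → p w ≤ Real.exp η * p z := by
    intro z w hzw
    have h1 := h hzw
    rw [Real.dist_eq, abs_lt] at h1
    have h2 := hpδ z
    have h3 := Real.add_one_le_exp η
    have h4 : (η + 1) * p z ≤ Real.exp η * p z := by
      apply mul_le_mul_of_nonneg_right h3 (hδ.le.trans h2)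
    nlinarith
  exact ⟨r, hr, fun z w hzw => ⟨key z w hzw, key w z (by rwa [dist_comm])⟩⟩

lemma loc_one {h g p L} (M δ : ℝ) {h' g' : V → V →L[ℝ] V} (hh : ∀ x, HasFDerivAt h (h' x) x)
    (hg' : ∀ x, HasFDerivAt g (g' x) x) (hgh : ∀ x : V, g (h x) = x)
    (hb : ∀ x, ‖h' x‖ ≤ Real.exp (L x)) (gb : ∀ y, ‖g' y‖ ≤ Real.exp (-L (g y)))
    (hL : UniformContinuous L) (hLM : ∀ x, |L x| ≤ M)
    (hp : UniformContinuous p) (hδ : 0 < δ) (hpδ : ∀ x, δ ≤ p x) {η : ℝ} (hη : 0 < η) :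
    ∃ R > (0 : ℝ), ∀ R' ≤ R, ∀ z w, min (dist z w) (dist (h z) (h w)) < R' →
      dist (h z) (h w) ≤ Real.exp (L z + η) * dist z w ∧
      dist z w ≤ Real.exp (-L z + η) * dist (h z) (h w) ∧
      p w ≤ Real.exp η * p z ∧ p z ≤ Real.exp η * p w := by
  obtain ⟨r₁, hr₁, H1⟩ := unif_p hp hδ hη hpδ
  obtain ⟨r₂, hr₂, H2⟩ := Metric.uniformContinuous_iff.1 hL η hη
  have hM : 0 ≤ M := (abs_nonneg _).trans (hLM 0)
  have hlh := mv_global hh (C := Real.exp M) fun x =>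
    (hb x).trans (Real.exp_le_exp.2 ((le_abs_self _).trans (hLM x)))
  have hlg := mv_global hg' (C := Real.exp M) fun x =>
    (gb x).trans (Real.exp_le_exp.2 ((neg_le_abs _).trans (hLM _)))
  have hE : 1 ≤ Real.exp M := Real.one_le_exp hM
  have hE0 := Real.exp_pos M
  set r := min r₁ r₂ with hr
  have hr0 : 0 < r := lt_min hr₁ hr₂
  refine ⟨r / (Real.exp M * Real.exp M), by positivity, fun R' hR' z w hzw => ?_⟩
  have hzw := hzw.trans_le hR'
  have hEE : Real.exp M * (r / (Real.exp M * Real.exp M)) = r / Real.exp M := by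
    field_simp
  have hle : r / (Real.exp M * Real.exp M) ≤ r / Real.exp M := by
    apply div_le_div_of_nonneg_left hr0.le hE0
    nlinarith
  have hle2 : r / Real.exp M ≤ r := div_le_self hr0.le hE
  have hboth : dist z w < r / Real.exp M ∧ dist (h z) (h w) < r / Real.exp M := by
    rcases min_lt_iff.1 hzw with h1 | h1
    · refine ⟨h1.trans_le hle, (hlh z w).trans_lt ?_⟩
      rw [← hEE]
      exact mul_lt_mul_of_pos_left h1 hE0
    · refine ⟨?_, h1.trans_le hle⟩
      have h2 := hlg (h z) (h w)
      rw [hgh, hgh] at h2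
      refine h2.trans_lt ?_
      rw [← hEE]
      exact mul_lt_mul_of_pos_left h1 hE0
  refine ⟨?_, ?_, H1 z w (hboth.1.trans_le (hle2.trans (min_le_left _ _)))⟩
  · refine mv_ball hh (hboth.1.trans_le hle2) fun x hx => (hb x).trans (Real.exp_le_exp.2 ?_)
    have := H2 (hx.trans_le (min_le_right _ _))
    rw [Real.dist_eq, abs_lt] at this
    linarith
  · have h2 := mv_ball hg' (C := Real.exp (-L z + η)) hboth.2 fun x hx =>
      (gb x).trans (Real.exp_le_exp.2 ?_)
    · rwa [hgh, hgh] at h2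
    · have h3 : dist z (g x) < r := by
        have h4 := hlg (h z) x
        rw [hgh] at h4
        refine h4.trans_lt ?_
        have := mul_lt_mul_of_pos_left hx hE0
        rwa [mul_div_cancel₀ _ hE0.ne'] at this
      have := H2 (h3.trans_le (min_le_right _ _))
      rw [Real.dist_eq, abs_lt] at this
      linarith

lemma lyap_of_coa {k : ℕ} {h : Fin k → V → V} {p : Fin k → V → ℝ} {b : ℝ}
    (hdiff : ∀ i, Differentiable ℝ (h i)) (hconf : ∀ i x, IsConformalMap (fderiv ℝ (h i) x))
    (hcoa : ∀ x y, x ≠ y → ∑ j, p j x * Real.log (dist (h j x) (h j y) / dist x y) < -b) (x : V) :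
    ∑ i, p i x * Real.log ‖fderiv ℝ (h i) x‖ ≤ -b := by
  obtain ⟨v, hv⟩ := exists_ne (0 : V)
  have hv0 : 0 < ‖v‖ := norm_pos_iff.2 hv
  have hlim : Tendsto (fun t : ℝ => ∑ j, p j x * Real.log (dist (h j x) (h j (x + t • v)) / dist x (x + t • v)))
      (nhdsWithin 0 {0}ᶜ) (nhds (∑ i, p i x * Real.log ‖fderiv ℝ (h i) x‖)) := by
    refine tendsto_finsetSum _ fun i _ => Tendsto.const_mul _ ?_
    have hc := conf_equiv (hconf i x)
    refine (Real.continuousAt_log hc.1.ne').tendsto.comp ?_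
    have hd := (hdiff i x).hasFDerivAt.hasLineDerivAt v
    rw [HasLineDerivAt, hasDerivAt_iff_tendsto_slope_zero] at hd
    have h2 := (hd.norm).div_const ‖v‖
    rw [hc.2.1 v, mul_div_cancel_right₀ _ hv0.ne'] at h2
    refine h2.congr' ?_
    filter_upwards [self_mem_nhdsWithin] with t ht
    have ht0 : t ≠ 0 := ht
    simp only [zero_add, zero_smul, add_zero]
    rw [dist_eq_norm', dist_eq_norm', norm_smul, add_sub_cancel_left, norm_smul, norm_inv]
    have ht1 : ‖t‖ ≠ 0 := norm_ne_zero_iff.2 ht0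
    field_simp
  refine le_of_tendsto hlim ?_
  filter_upwards [self_mem_nhdsWithin] with t ht
  have ht0 : t ≠ 0 := ht
  refine (hcoa x (x + t • v) ?_).le
  intro h0
  have : t • v = 0 := by simpa using h0.symm
  exact (smul_ne_zero ht0 hv) this

end Glue

lemma rpow_holder_aux {X : Type*} [MetricSpace X] {f : X → ℝ} {F A α ε : ℝ} (hA0 : 0 ≤ A)
    (hε : 0 < ε) (hεα : ε ≤ α) (hF : ∀ x y, |f x - f y| ≤ F)
    (hA : ∀ x y, |f x - f y| ≤ A * dist x y ^ α) (x y : X) :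
    |f x - f y| ≤ (F + A) * dist x y ^ ε := by
  have hF0 : 0 ≤ F := (abs_nonneg _).trans (hF x x)
  rcases le_total (dist x y) 1 with h | h
  · rcases eq_or_lt_of_le (dist_nonneg (x := x) (y := y)) with h0 | h0
    · have : x = y := dist_eq_zero.1 h0.symm
      subst this
      rw [sub_self, abs_zero]
      positivity
    · have h1 := Real.rpow_le_rpow_of_exponent_ge h0 h hεα
      have h2 : 0 ≤ dist x y ^ ε := by positivity
      have := hA x y
      nlinarith
  · have h1 := Real.one_le_rpow h hε.le
    have := hF x y
    nlinarith

lemma stab_of_coa {X : Type*} [MetricSpace X] {k : ℕ} {h : Fin k → X → X} {p : Fin k → X → ℝ}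
    {M δ b α : ℝ} (hM : 0 ≤ M) (hδ : 0 < δ) (hb : 0 < b) (hα : 0 < α) (hα1 : α ≤ 1)
    (hlip : ∀ i x y, dist (h i x) (h i y) ≤ Real.exp M * dist x y)
    (hp : ∀ i x, δ ≤ p i x) (hp1 : ∀ i x, p i x ≤ 1) (hsum : ∀ x, ∑ i, p i x = 1)
    (hcoa : ∀ x y, x ≠ y → ∑ j, p j x * Real.log (dist (h j x) (h j y) / dist x y) < -b)
    (C : Fin k → ℝ) (hC0 : ∀ i, 0 ≤ C i) (hC : ∀ i x y, |p i x - p i y| ≤ C i * dist x y ^ α)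
    (f : X → ℝ) (F A : ℝ) (hF : ∀ x, |f x| ≤ F) (hA : ∀ x y, |f x - f y| ≤ A * dist x y) (x y : X) :
    Tendsto (fun n => (ifsOp h p)^[n] f x - (ifsOp h p)^[n] f y) atTop (nhds 0) := by
  obtain ⟨ε, ρ, hε, hεα, hρ0, hρ1, hcon⟩ := coa_power hM hδ hb hα hlip hp hsum hcoa
  refine ifs_stable (H := ∑ i, (1 + C i)) (F := F) (A := 2 * F + |A|) x hδ hε (hεα.trans hα1) hρ0 hρ1 hp hsum hcon ?_ hF ?_ x y
  · intro x y
    rw [Finset.sum_mul]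
    refine Finset.sum_le_sum fun i _ => rpow_holder_aux (hC0 i) hε hεα (fun x y => ?_) (hC i) x y
    rw [abs_le]
    constructor <;> linarith [hp i x, hp i y, hp1 i x, hp1 i y]
  · refine rpow_holder_aux (abs_nonneg A) hε (hεα.trans hα1) (fun x y => ?_) fun x y => ?_
    · linarith [abs_sub (f x) (f y), hF x, hF y]
    · rw [Real.rpow_one]
      exact (hA x y).trans (mul_le_mul_of_nonneg_right (le_abs_self A) dist_nonneg)

lemma dim_main {V : Type*} [NormedAddCommGroup V] [NormedSpace ℝ V] [FiniteDimensional ℝ V]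
    [Nontrivial V] [MeasurableSpace V] [BorelSpace V]
    (k : ℕ) (hk : 2 ≤ k) (α : ℝ≥0) (hα0 : 0 < α) (hα1 : α ≤ 1)
    (h : Fin k → V → V)
    (p : Fin k → V → ℝ)
    -- the maps are C¹ with α-Hölder, uniformly bounded logarithmic derivative
    (hsmooth : ∀ i, ContDiff ℝ 1 (h i))
    (hholder : ∀ i, ∃ C : ℝ≥0, HolderWith C α fun x => Real.log ‖fderiv ℝ (h i) x‖)
    (hlogbdd : ∃ M : ℝ, ∀ i x, |Real.log ‖fderiv ℝ (h i) x‖| ≤ M)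
    -- the probabilities are α-Hölder, with values in (0,1), uniformly bounded away from 0
    (hpholder : ∀ i, ∃ C : ℝ≥0, HolderWith C α (p i))
    (hprange : ∀ i x, p i x ∈ Set.Ioo (0 : ℝ) 1)
    (hpbelow : ∃ δ > (0 : ℝ), ∀ i x, δ ≤ p i x)
    (hpsum : ∀ x, ∑ i, p i x = 1)
    -- contraction on average
    (hcoa : ∃ b > (0 : ℝ), ∀ x y, x ≠ y →
      ∑ j, p j x * Real.log (dist (h j x) (h j y) / dist x y) < -b)
    -- conformality of the maps
    (hconf : ∀ i x, IsConformalMap (fderiv ℝ (h i) x))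
    -- strong open set condition
    (hSOSC : ∃ U : Set V, U.Nonempty ∧ IsOpen U ∧
      (∀ i, h i '' U ⊆ U) ∧
      ∃ R₁ > (0 : ℝ), ∀ i j, i ≠ j →
        ∀ a ∈ h i '' U, ∀ b ∈ h j '' U, R₁ ≤ dist a b)
    -- the (unique) invariant probability measure
    (ν : Measure V) [IsProbabilityMeasure ν]
    (hinv : ν = ∑ i, Measure.map (h i)
      (ν.withDensity fun x => ENNReal.ofReal (p i x))) :
    lowerDimH ν = upperDimH ν ∧
    upperDimH ν = ENNReal.ofReal
      ((∫ x, ∑ i, p i x * Real.log (p i x) ∂ν) /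
        (∫ x, ∑ i, p i x * Real.log ‖fderiv ℝ (h i) x‖ ∂ν)) := by
  classical
  obtain ⟨M, hM⟩ := hlogbdd
  obtain ⟨δ, hδ, hpδ⟩ := hpbelow
  obtain ⟨b, hb, hcoa⟩ := hcoa
  obtain ⟨U, hUne, hUo, hUU, R₁, hR₁, hsep⟩ := hSOSC
  choose CL hCL using hholder
  choose Cp hCp using hpholder
  have i0 : Fin k := ⟨0, by omega⟩
  have hM0 : 0 ≤ M := (abs_nonneg _).trans (hM i0 0)
  have hinvs := fun i => conf_inverse (hsmooth i) (hM i) (hconf i)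
  choose g hgc hgh hhg hexp hgd using hinvs
  choose g' hg' hg'n using hgd
  have hdiff : ∀ i, Differentiable ℝ (h i) := fun i => (hsmooth i).differentiable (by norm_num)
  have hh' : ∀ i x, HasFDerivAt (h i) (fderiv ℝ (h i) x) x := fun i x => (hdiff i x).hasFDerivAt
  have hlip : ∀ i x y, dist (h i x) (h i y) ≤ Real.exp M * dist x y := fun i =>
    mv_global (hh' i) fun x => by
      rw [hexp]
      exact Real.exp_le_exp.2 ((le_abs_self _).trans (hM i x))
  have hp1 : ∀ i x, p i x ≤ 1 := fun i x => (hprange i x).2.le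
  have hpH : ∀ i x y, |p i x - p i y| ≤ (Cp i : ℝ) * dist x y ^ (α : ℝ) := fun i x y => by
    rw [← Real.dist_eq]
    exact (hCp i).dist_le x y
  have hLu : ∀ i, UniformContinuous fun x => Real.log ‖fderiv ℝ (h i) x‖ := fun i =>
    (hCL i).uniformContinuous hα0
  have hpu : ∀ i, UniformContinuous (p i) := fun i => (hCp i).uniformContinuous hα0
  have hsep' : ∀ i j, i ≠ j → ∀ a ∈ closure U, ∀ b ∈ closure U, R₁ ≤ dist (h i a) (h j b) := by
    intro i j hij x hx y hy
    have hcl : IsClosed {q : V × V |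
        R₁ ≤ dist (h i q.1) (h j q.2)} :=
      isClosed_le continuous_const
        (((hdiff i).continuous.comp continuous_fst).dist
          ((hdiff j).continuous.comp continuous_snd))
    have hsub : closure (U ×ˢ U) ⊆ {q : V × V |
        R₁ ≤ dist (h i q.1) (h j q.2)} :=
      closure_minimal (fun q hq => hsep i j hij _ ⟨q.1, hq.1, rfl⟩ _ ⟨q.2, hq.2, rfl⟩) hcl
    rw [closure_prod_eq] at hsub
    exact hsub (show (x, y) ∈ closure U ×ˢ closure U from ⟨hx, hy⟩)
  have hlyap : ∀ x, ∑ i, p i x * Real.log ‖fderiv ℝ (h i) x‖ ≤ -b := lyap_of_coa hdiff hconf hcoa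
  have hstab : ∀ (f : V → ℝ) (F A : ℝ), (∀ x, |f x| ≤ F) →
      (∀ x y, |f x - f y| ≤ A * dist x y) → ∀ x y,
      Tendsto (fun n => (ifsOp h p)^[n] f x - (ifsOp h p)^[n] f y) atTop (nhds 0) :=
    stab_of_coa hM0 hδ hb (α := (α : ℝ)) (by exact_mod_cast hα0) (by exact_mod_cast hα1)
      hlip hpδ hp1 hpsum hcoa (fun i => (Cp i : ℝ)) (fun i => (Cp i).2) hpH
  have hloc' : ∀ η > (0 : ℝ), ∃ R > (0 : ℝ), ∀ i z w, min (dist z w) (dist (h i z) (h i w)) < R →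
      dist (h i z) (h i w) ≤ Real.exp (Real.log ‖fderiv ℝ (h i) z‖ + η) * dist z w ∧
      dist z w ≤ Real.exp (-Real.log ‖fderiv ℝ (h i) z‖ + η) * dist (h i z) (h i w) ∧
      p i w ≤ Real.exp η * p i z ∧ p i z ≤ Real.exp η * p i w := by
    intro η hη
    have hloc := fun i => loc_one (L := fun x => Real.log ‖fderiv ℝ (h i) x‖) M δ (hh' i)
      (hg' i) (hgh i) (fun x => (hexp i x).le)
      (hg'n i) (hLu i) (hM i) (hpu i) hδ (hpδ i) hη
    choose R hR hRR using hloc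
    have hne : (Finset.univ : Finset (Fin k)).Nonempty := ⟨i0, Finset.mem_univ _⟩
    refine ⟨Finset.univ.inf' hne R, ?_, fun i z w hzw =>
      hRR i _ (Finset.inf'_le R (Finset.mem_univ i)) z w hzw⟩
    exact (Finset.lt_inf'_iff hne).2 fun i _ => hR i
  obtain ⟨S, hSp, hSL⟩ : ∃ S : Sys V k ν, S.p = p ∧
      S.L = fun i x => Real.log ‖fderiv ℝ (h i) x‖ := by
    refine ⟨{ h := h
              g := g
              p := p
              L := fun i x => Real.log ‖fderiv ℝ (h i) x‖
              K := closure U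
              M := M
              δ := δ
              R₁ := R₁
              b := b
              closedK := isClosed_closure
              neK := hUne.closure
              conth := fun i => (hdiff i).continuous
              contg := hgc
              contp := fun i => (hpu i).continuous
              contL := fun i => (hLu i).continuous
              gh := hgh
              hg := hhg
              hK := fun i x hx => map_mem_closure (hdiff i).continuous hx
                fun y hy => hUU i ⟨y, hy, rfl⟩
              R₁pos := hR₁
              sep := hsep'
              δpos := hδ
              hpδ := hpδ
              hp1 := hp1
              psum := hpsum
              Lbd := hM
              bpos := hb
              lyap := hlyap
              stab := hstab
              loc := hloc'
              inv := hinv }, rfl, rfl⟩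
  have hmain := S.dim_formula
  rw [S.φ_int, S.ψ_int, neg_div_neg_eq, hSp, hSL] at hmain
  exact hmain

/-- For a conformal contracting-on-average IFS satisfying the strong open set condition,
the Hausdorff dimension of the invariant measure exists and is given by the
Eckmann–Ruelle formula. -/
theorem dimH_invariant_measure_SOSC
    (d k : ℕ) (hd : 1 ≤ d) (hk : 2 ≤ k) (α : ℝ≥0) (hα0 : 0 < α) (hα1 : α ≤ 1)
    (h : Fin k → EuclideanSpace ℝ (Fin d) → EuclideanSpace ℝ (Fin d))
    (p : Fin k → EuclideanSpace ℝ (Fin d) → ℝ)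
    -- the maps are C¹ with α-Hölder, uniformly bounded logarithmic derivative
    (hsmooth : ∀ i, ContDiff ℝ 1 (h i))
    (hholder : ∀ i, ∃ C : ℝ≥0, HolderWith C α fun x => Real.log ‖fderiv ℝ (h i) x‖)
    (hlogbdd : ∃ M : ℝ, ∀ i x, |Real.log ‖fderiv ℝ (h i) x‖| ≤ M)
    -- the probabilities are α-Hölder, with values in (0,1), uniformly bounded away from 0
    (hpholder : ∀ i, ∃ C : ℝ≥0, HolderWith C α (p i))
    (hprange : ∀ i x, p i x ∈ Set.Ioo (0 : ℝ) 1)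
    (hpbelow : ∃ δ > (0 : ℝ), ∀ i x, δ ≤ p i x)
    (hpsum : ∀ x, ∑ i, p i x = 1)
    -- contraction on average
    (hcoa : ∃ b > (0 : ℝ), ∀ x y, x ≠ y →
      ∑ j, p j x * Real.log (dist (h j x) (h j y) / dist x y) < -b)
    -- conformality of the maps
    (hconf : ∀ i x, IsConformalMap (fderiv ℝ (h i) x))
    -- strong open set condition
    (hSOSC : ∃ U : Set (EuclideanSpace ℝ (Fin d)), U.Nonempty ∧ IsOpen U ∧
      (∀ i, h i '' U ⊆ U) ∧
      ∃ R₁ > (0 : ℝ), ∀ i j, i ≠ j →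
        ∀ a ∈ h i '' U, ∀ b ∈ h j '' U, R₁ ≤ dist a b)
    -- the (unique) invariant probability measure
    (ν : Measure (EuclideanSpace ℝ (Fin d))) [IsProbabilityMeasure ν]
    (hinv : ν = ∑ i, Measure.map (h i)
      (ν.withDensity fun x => ENNReal.ofReal (p i x))) :
    lowerDimH ν = upperDimH ν ∧
    upperDimH ν = ENNReal.ofReal
      ((∫ x, ∑ i, p i x * Real.log (p i x) ∂ν) /
        (∫ x, ∑ i, p i x * Real.log ‖fderiv ℝ (h i) x‖ ∂ν)) := by
  have : Nonempty (Fin d) := ⟨⟨0, hd⟩⟩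
  exact dim_main k hk α hα0 hα1 h p hsmooth hholder hlogbdd hpholder hprange hpbelow hpsum hcoa
    hconf hSOSC ν hinv
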